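/- arXiv:2510.06900 — 4 statements merged into one kernel-verified Lean document; each statement's English description precedes it below -/
import Mathlib

section
/- Let f : X → Y be an η-quasisymmetry between metric spaces and let A, B ⊆ X be nonempty compact sets with |A ∪ B| > 0. Then dist(f(A), f(B)) ≤ η(2·dist(A,B)/|A ∪ B|)·|f(A) ∪ f(B)|. -/
open Set Metric MeasureTheory ProbabilityTheory Filter
open scoped ENNReal NNReal Classical

noncomputable section

/-- A distortion function: a homeomorphism of `[0,∞)` onto itself
(equivalently, a continuous strictly increasing surjection of `[0,∞)` with `η 0 = 0`). -/
def IsDistortion (η : ℝ → ℝ) : Prop :=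
  ContinuousOn η (Set.Ici 0) ∧ StrictMonoOn η (Set.Ici 0) ∧ η 0 = 0 ∧
    Set.SurjOn η (Set.Ici 0) (Set.Ici 0)

/-- `f` is an `η`-quasisymmetry on the set `E`:
it is injective on `E` and satisfies the quasisymmetry inequality on points of `E`. -/
def IsQSOn {X Y : Type*} [MetricSpace X] [MetricSpace Y] (η : ℝ → ℝ) (f : X → Y)
    (E : Set X) : Prop :=
  Set.InjOn f E ∧ ∀ x ∈ E, ∀ y ∈ E, ∀ z ∈ E, x ≠ z →
    dist (f x) (f y) ≤ η (dist x y / dist x z) * dist (f x) (f z)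

/-- `f` is a `β`-power quasisymmetry on `E`: an `η`-quasisymmetry with
`η t = C * max (t ^ β) (t ^ (1 / β))` for some `C > 0`. -/
def IsPowerQSOn {X Y : Type*} [MetricSpace X] [MetricSpace Y] (β : ℝ) (f : X → Y)
    (E : Set X) : Prop :=
  ∃ C : ℝ, 0 < C ∧ IsQSOn (fun t => C * max (t ^ β) (t ^ (1 / β))) f E

/-- Distance between two sets: `inf {dist a b : a ∈ A, b ∈ B}`. -/
def setDist {X : Type*} [MetricSpace X] (A B : Set X) : ℝ :=
  sInf (Set.image2 dist A B)

/-- The closed axis-parallel cube with lower corner `c` and side length `l`. -/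
def cube {d : ℕ} (c : Fin d → ℝ) (l : ℝ) : Set (EuclideanSpace ℝ (Fin d)) :=
  {x | ∀ i, c i ≤ x i ∧ x i ≤ c i + l}

/-- Lower corner of the subcube with address `a` when the cube with lower corner `c` and
side `l` is divided into `K ^ d` congruent subcubes. -/
def childCorner {d : ℕ} (c : Fin d → ℝ) (l : ℝ) (K : ℕ) (a : Fin d → Fin K) : Fin d → ℝ :=
  fun i => c i + l / K * (a i : ℝ)

/-- Side length `N ^ (-m*n)` of level-`n` cubes in the `(N,m)`-fat Cantor construction. -/
def fatSide (N m n : ℕ) : ℝ := ((N : ℝ) ^ (m * n))⁻¹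

/-- `𝓕` is the sequence of families of cubes of an `(N,m)`-fat Cantor construction in `[0,1]^d`:
`𝓕 0 = {[0,1]^d}`, and each cube `Q ∈ 𝓕 n` is divided into `N^(m*d)` congruent subcubes of which
exactly one is removed, `𝓕 (n+1)` consisting of all retained subcubes. -/
def IsFatCantorFamilies (d N m : ℕ) (𝓕 : ℕ → Set (Set (EuclideanSpace ℝ (Fin d)))) : Prop :=
  𝓕 0 = {cube (fun _ => 0) 1} ∧
  (∀ n, ∀ Q ∈ 𝓕 n, ∃ c : Fin d → ℝ, Q = cube c (fatSide N m n) ∧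
    ∃ a₀ : Fin d → Fin (N ^ m),
      {Q' ∈ 𝓕 (n + 1) | Q' ⊆ Q} =
        {Q' | ∃ a : Fin d → Fin (N ^ m), a ≠ a₀ ∧
          Q' = cube (childCorner c (fatSide N m n) (N ^ m) a) (fatSide N m (n + 1))}) ∧
  (∀ n, ∀ Q' ∈ 𝓕 (n + 1), ∃ Q ∈ 𝓕 n, Q' ⊆ Q)

/-- `F` is an `(N,m)`-fat Cantor set in `[0,1]^d`. -/
def IsFatCantorSet (d N m : ℕ) (F : Set (EuclideanSpace ℝ (Fin d))) : Prop :=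
  ∃ 𝓕, IsFatCantorFamilies d N m 𝓕 ∧ F = ⋂ n, ⋃₀ 𝓕 n

/-- Side length `∏_{m=1}^n (N m)⁻¹` of level-`n` cubes of a dense-Cantor construction with
subdivision sequence `N`. -/
def denseSide (N : ℕ → ℕ) (n : ℕ) : ℝ := ∏ m ∈ Finset.Icc 1 n, ((N m : ℝ))⁻¹

/-- `𝓔` is the sequence of families of cubes of a dense-Cantor construction in `[0,1]^d`
with subdivision sequence `N`: `𝓔 0 = {[0,1]^d}`, every cube of `𝓔 (n+1)` is one of the
`(N (n+1))^d` congruent subcubes of a cube of `𝓔 n`, and every cube of `𝓔 n` has at least one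
retained subcube in `𝓔 (n+1)`. -/
def IsDenseCantorFamilies (d : ℕ) (N : ℕ → ℕ)
    (𝓔 : ℕ → Set (Set (EuclideanSpace ℝ (Fin d)))) : Prop :=
  𝓔 0 = {cube (fun _ => 0) 1} ∧
  (∀ n, ∀ Q' ∈ 𝓔 (n + 1), ∃ Q ∈ 𝓔 n, Q' ⊆ Q ∧ ∃ c : Fin d → ℝ, Q = cube c (denseSide N n) ∧
      ∃ a : Fin d → Fin (N (n + 1)),
        Q' = cube (childCorner c (denseSide N n) (N (n + 1)) a) (denseSide N (n + 1))) ∧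
  (∀ n, ∀ Q ∈ 𝓔 n, ∃ Q' ∈ 𝓔 (n + 1), Q' ⊆ Q)

/-- A (possibly degenerate) line segment parallel to the `d`-th coordinate direction
(the kernel of the projection to the first `d-1` coordinates). -/
def IsVerticalSeg {d : ℕ} (A : Set (EuclideanSpace ℝ (Fin d))) : Prop :=
  ∃ x y : EuclideanSpace ℝ (Fin d), A = segment ℝ x y ∧
    ∀ i : Fin d, (i : ℕ) < d - 1 → x i = y i

/-- The dense-Cantor construction `𝓔` is `(Δ_n)_n`-dense: for all sufficiently large `n` and
every `Q ∈ 𝓔 n`, every vertical line segment contained in `Q \ ⋃ 𝓔 (n+1)` has diameter at most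
`Δ (n+1) * diam Q`. -/
def IsDeltaDense {d : ℕ} (Δ : ℕ → ℝ) (𝓔 : ℕ → Set (Set (EuclideanSpace ℝ (Fin d)))) : Prop :=
  ∃ n₀ : ℕ, ∀ n, n₀ ≤ n → ∀ Q ∈ 𝓔 n, ∀ A : Set (EuclideanSpace ℝ (Fin d)),
    IsVerticalSeg A → A ⊆ Q \ ⋃₀ 𝓔 (n + 1) →
      Metric.diam A ≤ Δ (n + 1) * Metric.diam Q

/-- The dyadic cube of level `k` in `[0,1]^d` with address `a`. -/
def dyCube (d k : ℕ) (a : Fin d → Fin (2 ^ k)) : Set (EuclideanSpace ℝ (Fin d)) :=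
  cube (fun i => (a i : ℝ) / 2 ^ k) (((2 : ℝ) ^ k)⁻¹)

/-- Lower corner of the level-`n` `N`-adic cube of `[0,1]^d` with address word `w`. -/
def fatCorner (d N : ℕ) {n : ℕ} (w : Fin n → Fin d → Fin N) : Fin d → ℝ :=
  fun i => ∑ j : Fin n, ((N : ℝ) ^ (j.val + 1))⁻¹ * (w j i : ℝ)

/-- In fractal percolation with retention coins `X`, the cube with address word `w` survives if
all of its ancestors (including itself) are retained. -/
def FatSurvives {Ω : Type*} {d N : ℕ} (X : ∀ n : ℕ, (Fin n → Fin d → Fin N) → Ω → Bool)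
    (ω : Ω) {n : ℕ} (w : Fin n → Fin d → Fin N) : Prop :=
  ∀ m : ℕ, ∀ h : m ≤ n, 1 ≤ m → X m (fun j => w (Fin.castLE h j)) ω = true

/-- The fractal percolation limit set determined by the retention coins `X` at sample `ω`:
the intersection over `n` of the unions of surviving level-`n` `N`-adic cubes. -/
def fatPerc {Ω : Type*} (d N : ℕ) (X : ∀ n : ℕ, (Fin n → Fin d → Fin N) → Ω → Bool)
    (ω : Ω) : Set (EuclideanSpace ℝ (Fin d)) :=
  ⋂ n : ℕ, ⋃ w : Fin n → Fin d → Fin N, ⋃ (_ : FatSurvives X ω w),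
    cube (fatCorner d N w) (((N : ℝ) ^ n)⁻¹)

/-- Lower corner of the level-`n` cube with address word `w` in the subdivision scheme where the
level-`j` cubes have side `denseSide N j`. -/
def denseCorner (d : ℕ) (N : ℕ → ℕ) {n : ℕ}
    (w : (j : Fin n) → Fin d → Fin (N (j.val + 1))) : Fin d → ℝ :=
  fun i => ∑ j : Fin n, denseSide N (j.val + 1) * (w j i : ℝ)

/-- Survival of the cube with address word `w` in dense fractal percolation with coins `X`. -/
def DenseSurvives {Ω : Type*} {d : ℕ} {N : ℕ → ℕ}
    (X : ∀ n : ℕ, ((j : Fin n) → Fin d → Fin (N (j.val + 1))) → Ω → Bool) (ω : Ω) {n : ℕ}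
    (w : (j : Fin n) → Fin d → Fin (N (j.val + 1))) : Prop :=
  ∀ m : ℕ, ∀ h : m ≤ n, 1 ≤ m → X m (fun j => w (Fin.castLE h j)) ω = true

/-- The dense fractal percolation limit set determined by the retention coins `X` at `ω`. -/
def densePerc {Ω : Type*} (d : ℕ) (N : ℕ → ℕ)
    (X : ∀ n : ℕ, ((j : Fin n) → Fin d → Fin (N (j.val + 1))) → Ω → Bool) (ω : Ω) :
    Set (EuclideanSpace ℝ (Fin d)) :=
  ⋂ n : ℕ, ⋃ w : (j : Fin n) → Fin d → Fin (N (j.val + 1)), ⋃ (_ : DenseSurvives X ω w),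
    cube (denseCorner d N w) (denseSide N n)

/-- The function `g_N (s) = 1 - (1-s)^N - N s (1-s)^(N-1) + N^(-5)`. -/
def gFun (N : ℕ) (s : ℝ) : ℝ :=
  1 - (1 - s) ^ N - N * s * (1 - s) ^ (N - 1) + ((N : ℝ) ^ 5)⁻¹

end
/-- For an `η`-quasisymmetry `f` and nonempty compact sets `A, B` with
`|A ∪ B| > 0`, one has `dist(f A, f B) ≤ η(2 dist(A,B)/|A ∪ B|) · |f A ∪ f B|`. -/
theorem qs_setDist_le {X Y : Type*} [MetricSpace X] [MetricSpace Y]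
    (η : ℝ → ℝ) (hη : IsDistortion η) (f : X → Y) (hf : IsQSOn η f Set.univ)
    (A B : Set X) (hAne : A.Nonempty) (hBne : B.Nonempty)
    (hAc : IsCompact A) (hBc : IsCompact B) (hAB : 0 < Metric.diam (A ∪ B)) :
    setDist (f '' A) (f '' B) ≤
      η (2 * setDist A B / Metric.diam (A ∪ B)) * Metric.diam (f '' A ∪ f '' B) := by
  obtain ⟨_, hmono, h0, _⟩ := hη
  obtain ⟨_, hqs⟩ := hf
  have hc : IsCompact (A ×ˢ B) := hAc.prod hBc
  obtain ⟨⟨a, b⟩, ⟨ha, hb⟩, hmin⟩ := hc.exists_isMinOn (hAne.prod hBne)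
    (continuous_dist.continuousOn (s := A ×ˢ B))
  simp only at ha hb
  have hd : setDist A B = dist a b := by
    apply IsLeast.csInf_eq
    refine ⟨⟨a, ha, b, hb, rfl⟩, ?_⟩
    rintro _ ⟨x, hx, y, hy, rfl⟩
    exact hmin (show (x, y) ∈ A ×ˢ B from ⟨hx, hy⟩)
  obtain ⟨z, hz, hmax⟩ := (hAc.union hBc).exists_isMaxOn ⟨a, Or.inl ha⟩
    ((continuous_const.dist continuous_id : Continuous fun y => dist a y).continuousOn)
  have hmax' : ∀ y ∈ A ∪ B, dist a y ≤ dist a z := fun y hy => hmax hy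
  have hD : Metric.diam (A ∪ B) ≤ 2 * dist a z := by
    refine Metric.diam_le_of_forall_dist_le (by positivity) fun x hx y hy => ?_
    linarith [dist_triangle_left x y a, hmax' x hx, hmax' y hy]
  have hpos : 0 < dist a z := by linarith
  have haz : a ≠ z := dist_pos.1 hpos
  have key : ∀ y, dist (f a) (f y) ≤ η (dist a y / dist a z) * dist (f a) (f z) := fun y =>
    hqs a (mem_univ _) y (mem_univ _) z (mem_univ _) haz
  have hbdd : Bornology.IsBounded (f '' A ∪ f '' B) := by
    rw [← image_union]
    refine (Metric.isBounded_closedBall (x := f a) (r := η 1 * dist (f a) (f z))).subset ?_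
    rintro _ ⟨y, hy, rfl⟩
    rw [Metric.mem_closedBall, dist_comm]
    refine (key y).trans (mul_le_mul_of_nonneg_right ?_ dist_nonneg)
    exact hmono.monotoneOn (show (0:ℝ) ≤ _ by positivity) (show (0:ℝ) ≤ 1 by norm_num)
      ((div_le_one hpos).2 (hmax' y hy))
  have hfz : f z ∈ f '' A ∪ f '' B := by
    rw [← image_union]; exact mem_image_of_mem f hz
  have h1 : setDist (f '' A) (f '' B) ≤ dist (f a) (f b) := by
    refine csInf_le ⟨0, ?_⟩ ⟨f a, mem_image_of_mem f ha, f b, mem_image_of_mem f hb, rfl⟩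
    rintro _ ⟨x, _, y, _, rfl⟩
    exact dist_nonneg
  rw [hd]
  have ht : (0:ℝ) ≤ 2 * dist a b / Metric.diam (A ∪ B) := by positivity
  have hη0 : 0 ≤ η (2 * dist a b / Metric.diam (A ∪ B)) := by
    rw [← h0]; exact hmono.monotoneOn (show (0:ℝ) ≤ 0 from le_rfl) ht ht
  refine h1.trans ((key b).trans (mul_le_mul ?_ ?_ dist_nonneg hη0))
  · refine hmono.monotoneOn (show (0:ℝ) ≤ _ by positivity) ht ?_
    rw [div_le_div_iff₀ hpos hAB]
    nlinarith [dist_nonneg (x := a) (y := b)]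
  · exact Metric.dist_le_diam_of_mem hbdd (Or.inl (mem_image_of_mem f ha)) hfz
end

section
/- Let f : X → Y be an η-quasisymmetry between metric spaces and let A, B ⊆ X be nonempty compact sets with 0 < |A| and |B| ≤ |A|. Then dist(f(A), f(B)) ≤ (1 + η(2 + dist(A,B)/|A|))·|f(A)|. -/
open Set Metric MeasureTheory ProbabilityTheory Filter
open scoped ENNReal NNReal Classical

/-- For an `η`-quasisymmetry `f` and nonempty compact sets `A, B` with
`0 < |A|` and `|B| ≤ |A|`, one has `dist(f A, f B) ≤ (1 + η(2 + dist(A,B)/|A|)) · |f A|`. -/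
theorem qs_setDist_le_variant {X Y : Type*} [MetricSpace X] [MetricSpace Y]
    (η : ℝ → ℝ) (hη : IsDistortion η) (f : X → Y) (hf : IsQSOn η f Set.univ)
    (A B : Set X) (hAne : A.Nonempty) (hBne : B.Nonempty)
    (hAc : IsCompact A) (hBc : IsCompact B)
    (hA : 0 < Metric.diam A) (hBA : Metric.diam B ≤ Metric.diam A) :
    setDist (f '' A) (f '' B) ≤
      (1 + η (2 + setDist A B / Metric.diam A)) * Metric.diam (f '' A) := by
  obtain ⟨hcont, hmono, h0, -⟩ := hη
  obtain ⟨-, hqs⟩ := hf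
  set D := Metric.diam A with hD
  -- points realizing the diameter of A
  obtain ⟨⟨a₀, a₁⟩, ⟨ha₀, ha₁⟩, hmax⟩ :=
    (hAc.prod hAc).exists_isMaxOn (hAne.prod hAne)
      (f := fun p : X × X => dist p.1 p.2) (by fun_prop)
  have hd : dist a₀ a₁ = D := by
    apply le_antisymm (Metric.dist_le_diam_of_mem hAc.isBounded ha₀ ha₁)
    apply Metric.diam_le_of_forall_dist_le dist_nonneg
    intro x hx y hy
    exact hmax (a := (x, y)) ⟨hx, hy⟩
  have hne : a₀ ≠ a₁ := by
    rintro rfl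
    rw [dist_self] at hd
    linarith
  -- nearby points of A and B
  have hs0 : 0 ≤ setDist A B := by
    apply Real.sInf_nonneg
    rintro _ ⟨x, -, y, -, rfl⟩
    exact dist_nonneg
  obtain ⟨_, ⟨a, ha, b, hb, rfl⟩, hab⟩ :=
    exists_lt_of_csInf_lt (hAne.image2 hBne (f := dist))
      (show sInf (Set.image2 dist A B) < setDist A B + D by
        change setDist A B < _
        linarith)
  have h1 : dist a₀ b ≤ 2 * D + setDist A B := by
    have := dist_triangle a₀ a b
    have := Metric.dist_le_diam_of_mem hAc.isBounded ha₀ ha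
    linarith
  have h2 : dist a₀ b / dist a₀ a₁ ≤ 2 + setDist A B / D := by
    rw [hd, div_le_iff₀ hA, add_mul, div_mul_cancel₀ _ hA.ne']
    exact h1
  have hpos : (0 : ℝ) ≤ 2 + setDist A B / D := by positivity
  have h3 : η (dist a₀ b / dist a₀ a₁) ≤ η (2 + setDist A B / D) :=
    hmono.monotoneOn (Set.mem_Ici.2 (by positivity)) (Set.mem_Ici.2 hpos) h2
  have h4 : 0 ≤ η (2 + setDist A B / D) := by
    have := hmono.monotoneOn (Set.mem_Ici.2 le_rfl) (Set.mem_Ici.2 hpos) hpos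
    linarith
  -- the image of A is bounded
  have hbdd : Bornology.IsBounded (f '' A) := by
    apply (Metric.isBounded_closedBall (x := f a₀) (r := η 1 * dist (f a₀) (f a₁))).subset
    rintro _ ⟨x, hx, rfl⟩
    rw [Metric.mem_closedBall, dist_comm]
    refine (hqs a₀ trivial x trivial a₁ trivial hne).trans ?_
    apply mul_le_mul_of_nonneg_right _ dist_nonneg
    apply hmono.monotoneOn (Set.mem_Ici.2 (by positivity)) (Set.mem_Ici.2 zero_le_one)
    rw [hd, div_le_one hA]
    exact Metric.dist_le_diam_of_mem hAc.isBounded ha₀ hx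
  have h5 : dist (f a₀) (f a₁) ≤ Metric.diam (f '' A) :=
    Metric.dist_le_diam_of_mem hbdd (Set.mem_image_of_mem f ha₀) (Set.mem_image_of_mem f ha₁)
  have h6 : setDist (f '' A) (f '' B) ≤ dist (f a₀) (f b) := by
    apply csInf_le
    · refine ⟨0, ?_⟩
      rintro _ ⟨x, -, y, -, rfl⟩
      exact dist_nonneg
    · exact ⟨_, Set.mem_image_of_mem f ha₀, _, Set.mem_image_of_mem f hb, rfl⟩
  calc setDist (f '' A) (f '' B) ≤ dist (f a₀) (f b) := h6
    _ ≤ η (dist a₀ b / dist a₀ a₁) * dist (f a₀) (f a₁) :=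
        hqs a₀ trivial b trivial a₁ trivial hne
    _ ≤ η (2 + setDist A B / D) * Metric.diam (f '' A) :=
        mul_le_mul h3 h5 dist_nonneg h4
    _ ≤ (1 + η (2 + setDist A B / D)) * Metric.diam (f '' A) := by
        have := Metric.diam_nonneg (s := f '' A)
        linarith
end

section
/- Let d ≥ 1 and N ≥ 2 be integers, let η be a distortion function and let 0 < α < d. Then there exists m_0 ∈ ℕ such that for every m ≥ m_0, every (N,m)-fat Cantor set F ⊆ [0,1]^d, every metric space Y and every η-quasisymmetry f : F → Y, one has dim_H f(F) ≥ α. -/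
open Set Metric MeasureTheory ProbabilityTheory Filter
open scoped ENNReal NNReal Classical

/-- Mass-distribution style lemma on a tree of sets. -/
theorem tree_hausdorff_ne_zero {Y T : Type*} [MetricSpace Y] [MeasurableSpace Y] [BorelSpace Y]
    (A : T → Set Y) (w : T → ℝ) (good : T → Prop) (R : T → T → Prop) (α c : ℝ)
    (hα : 0 < α) (hc : 0 < c) (hw : ∀ t, good t → 0 < w t)
    (hch : ∀ t, good t → ∃ (ι : Type) (s : Finset ι) (q : ι → T),
      (∀ i ∈ s, good (q i) ∧ R t (q i) ∧ A (q i) ⊆ A t ∧ w (q i) ≤ w t / 2) ∧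
      (∀ i ∈ s, ∀ j ∈ s, i ≠ j → ∀ y ∈ A (q i), ∀ z ∈ A (q j), c * w t ≤ dist y z) ∧
      w t ^ α ≤ ∑ i ∈ s, w (q i) ^ α)
    (hInter : ∀ q : ℕ → T, (∀ k, good (q k)) → (∀ k, R (q k) (q (k + 1))) →
      (⋂ k, A (q k)).Nonempty)
    (t₀ : T) (h₀ : good t₀) : Measure.hausdorffMeasure α (A t₀) ≠ 0 := by
  intro hzero
  set C : ℝ≥0∞ := ENNReal.ofReal (c ^ α) with hC
  have hC0 : C ≠ 0 := by
    rw [hC]; simpa using Real.rpow_pos_of_pos hc α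
  have hCt : C ≠ ⊤ := ENNReal.ofReal_ne_top
  set δ : ℝ≥0∞ := ENNReal.ofReal (w t₀ ^ α) with hδ
  have hδ0 : δ ≠ 0 := by
    rw [hδ]; simpa using Real.rpow_pos_of_pos (hw t₀ h₀) α
  obtain ⟨U, hU, hUs⟩ : ∃ U : ℕ → Set Y, A t₀ ⊆ ⋃ n, U n ∧
      ∑' n, Metric.ediam (U n) ^ α < C * (δ / 2) := by
    rw [Measure.hausdorffMeasure_apply] at hzero
    have h1 := le_of_eq hzero
    simp only [iSup_le_iff] at h1
    have h2 := h1 1 one_pos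
    have h3 : (0 : ℝ≥0∞) < C * (δ / 2) := by
      apply ENNReal.mul_pos hC0
      simpa using hδ0
    have h4 := lt_of_le_of_lt h2 h3
    simp only [iInf_lt_iff] at h4
    obtain ⟨U, hU, -, hs⟩ := h4
    refine ⟨U, hU, lt_of_le_of_lt (ENNReal.tsum_le_tsum fun n => ?_) hs⟩
    by_cases hn : (U n).Nonempty
    · simp [hn]
    · rw [Set.not_nonempty_iff_eq_empty] at hn
      simp [hn, hα]
  obtain ⟨ε, hε, hεs⟩ := ENNReal.exists_pos_sum_of_countable
    (ε := δ / 2) (by simpa using hδ0) ℕ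
  set v : ℕ → ℝ≥0∞ := fun n => C⁻¹ * Metric.ediam (U n) ^ α + ε n with hv
  have hvpos : ∀ n, 0 < v n := fun n =>
    lt_of_lt_of_le (by simpa using hε n) (le_add_left le_rfl)
  have hvsum : ∑' n, v n < δ := by
    rw [hv, ENNReal.tsum_add, ENNReal.tsum_mul_left, ← ENNReal.add_halves δ]
    refine ENNReal.add_lt_add ?_ hεs
    calc C⁻¹ * ∑' n, Metric.ediam (U n) ^ α < C⁻¹ * (C * (δ / 2)) :=
          (ENNReal.mul_lt_mul_iff_right (by simpa using hCt) (by simpa using hC0)).2 hUs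
      _ = δ / 2 := by rw [← mul_assoc, ENNReal.inv_mul_cancel hC0 hCt, one_mul]
  have hvbig : ∀ n t, good t → ∀ y ∈ U n, ∀ z ∈ U n, c * w t ≤ dist y z →
      ENNReal.ofReal (w t ^ α) ≤ v n := by
    intro n t ht y hy z hz hyz
    have h1 : ENNReal.ofReal (c * w t) ≤ Metric.ediam (U n) := by
      refine le_trans ?_ (Metric.edist_le_ediam_of_mem hy hz)
      rw [edist_dist]
      exact ENNReal.ofReal_le_ofReal hyz
    have h2 := ENNReal.rpow_le_rpow h1 hα.le
    rw [ENNReal.ofReal_rpow_of_pos (mul_pos hc (hw t ht)),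
      Real.mul_rpow hc.le (hw t ht).le, ENNReal.ofReal_mul (by positivity)] at h2
    calc ENNReal.ofReal (w t ^ α) = C⁻¹ * (C * ENNReal.ofReal (w t ^ α)) := by
          rw [← mul_assoc, ENNReal.inv_mul_cancel hC0 hCt, one_mul]
      _ ≤ C⁻¹ * Metric.ediam (U n) ^ α := by gcongr
      _ ≤ v n := le_self_add
  set ind : ℕ → T → ℝ≥0∞ := fun n t => if (U n ∩ A t).Nonempty then v n else 0 with hind
  set S : T → ℝ≥0∞ := fun t => ∑' n, ind n t with hS
  have step : ∀ t : {t // good t ∧ S t < ENNReal.ofReal (w t ^ α)},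
      ∃ t' : {t // good t ∧ S t < ENNReal.ofReal (w t ^ α)},
        R t t' ∧ w t' ≤ w t / 2 := by
    rintro ⟨t, ht, hSt⟩
    obtain ⟨ι, s, q, h1, h2, h3⟩ := hch t ht
    by_contra hcon
    have hcon' : ∀ i ∈ s, ENNReal.ofReal (w (q i) ^ α) ≤ S (q i) := by
      intro i hi
      by_contra hlt
      exact hcon ⟨⟨q i, (h1 i hi).1, not_le.1 hlt⟩, (h1 i hi).2.1, (h1 i hi).2.2.2⟩
    have h4 : ENNReal.ofReal (w t ^ α) ≤ S t := by
      calc ENNReal.ofReal (w t ^ α) ≤ ENNReal.ofReal (∑ i ∈ s, w (q i) ^ α) :=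
            ENNReal.ofReal_le_ofReal h3
        _ = ∑ i ∈ s, ENNReal.ofReal (w (q i) ^ α) :=
            ENNReal.ofReal_sum_of_nonneg fun i hi =>
              Real.rpow_nonneg (hw _ (h1 i hi).1).le _
        _ ≤ ∑ i ∈ s, S (q i) := Finset.sum_le_sum hcon'
        _ = ∑' n, ∑ i ∈ s, ind n (q i) :=
            (Summable.tsum_finsetSum fun _ _ => ENNReal.summable).symm
        _ ≤ S t := by
          refine ENNReal.tsum_le_tsum fun n => ?_
          by_cases hex : ∃ i ∈ s, (U n ∩ A (q i)).Nonempty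
          · obtain ⟨i, hi, hne⟩ := hex
            have hit : (U n ∩ A t).Nonempty :=
              hne.mono (Set.inter_subset_inter_right _ (h1 i hi).2.2.1)
            have hrest : ∀ j ∈ s, j ≠ i → ind n (q j) = 0 := by
              intro j hj hji
              by_contra hne0
              have hj2 : (U n ∩ A (q j)).Nonempty := by
                by_contra hno
                exact hne0 (by simp [hind, hno])
              obtain ⟨y, hyU, hyA⟩ := hne
              obtain ⟨z, hzU, hzA⟩ := hj2
              have hb := hvbig n t ht y hyU z hzU (h2 i hi j hj hji.symm y hyA z hzA)
              have hc2 : v n ≤ S t := by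
                have := ENNReal.le_tsum (f := fun n => ind n t) n
                simpa [hind, hit] using this
              exact absurd (hb.trans hc2) (not_le.2 hSt)
            rw [Finset.sum_eq_single_of_mem i hi hrest]
            simp [hind, hne, hit]
          · push Not at hex
            rw [Finset.sum_eq_zero]
            · exact zero_le
            · intro i hi
              simp [hind, hex i hi]
    exact absurd h4 (not_le.2 hSt)
  choose nxt hR hhalf using step
  have hS0 : S t₀ < ENNReal.ofReal (w t₀ ^ α) := by
    refine lt_of_le_of_lt (ENNReal.tsum_le_tsum fun n => ?_) hvsum
    simp only [hind]
    split_ifs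
    · exact le_rfl
    · exact zero_le
  set Q : ℕ → {t // good t ∧ S t < ENNReal.ofReal (w t ^ α)} :=
    fun k => nxt^[k] ⟨t₀, h₀, hS0⟩ with hQ
  have hQs : ∀ k, Q (k + 1) = nxt (Q k) := fun k => by
    simp only [hQ, Function.iterate_succ_apply']
  obtain ⟨y, hy⟩ := hInter (fun k => (Q k : T)) (fun k => (Q k).2.1)
    (fun k => by rw [hQs]; exact hR _)
  rw [Set.mem_iInter] at hy
  obtain ⟨n, hn⟩ := Set.mem_iUnion.1 (hU (hy 0))
  have hle : ∀ k, v n ≤ ENNReal.ofReal (w (Q k) ^ α) := by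
    intro k
    refine le_trans ?_ (Q k).2.2.le
    have := ENNReal.le_tsum (f := fun n => ind n (Q k)) n
    have hne : (U n ∩ A (Q k)).Nonempty := ⟨y, hn, hy k⟩
    simpa [hind, hne] using this
  have hwk : ∀ k, w (Q k) ≤ w t₀ * (1 / 2) ^ k := by
    intro k
    induction k with
    | zero => simp [hQ]
    | succ k ih =>
      rw [hQs, pow_succ]
      have := hhalf (Q k)
      linarith
  have hlim : Filter.Tendsto (fun k : ℕ => ENNReal.ofReal ((w t₀ * (1 / 2) ^ k) ^ α))
      Filter.atTop (nhds 0) := by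
    have h1 : Filter.Tendsto (fun k : ℕ => w t₀ * (1 / 2 : ℝ) ^ k) Filter.atTop (nhds 0) := by
      simpa using (tendsto_pow_atTop_nhds_zero_of_lt_one (by norm_num : (0 : ℝ) ≤ 1 / 2)
        (by norm_num)).const_mul (w t₀)
    have h2 := (h1.rpow_const (p := α) (Or.inr hα.le))
    rw [Real.zero_rpow hα.ne'] at h2
    simpa using ENNReal.tendsto_ofReal h2
  have hfin : v n ≤ 0 := by
    refine ge_of_tendsto' hlim fun k => (hle k).trans ?_
    exact ENNReal.ofReal_le_ofReal
      (Real.rpow_le_rpow (hw _ (Q k).2.1).le (hwk k) hα.le)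
  exact absurd hfin (not_le.2 (hvpos n))

theorem sum_update_lines {d K : ℕ} (i₀ : Fin d) (w : (Fin d → Fin K) → ℝ) :
    ∑ a : Fin d → Fin K, ∑ j : Fin K, w (Function.update a i₀ j) = K * ∑ a, w a := by
  let e : ((Fin d → Fin K) × Fin K) ≃ ((Fin d → Fin K) × Fin K) :=
    { toFun := fun p => (Function.update p.1 i₀ p.2, p.1 i₀)
      invFun := fun p => (Function.update p.1 i₀ p.2, p.1 i₀)
      left_inv := fun p => by simp
      right_inv := fun p => by simp }
  rw [← Fintype.sum_prod_type' (f := fun a j => w (Function.update a i₀ j))]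
  rw [show (∑ x : (Fin d → Fin K) × Fin K, w (Function.update x.1 i₀ x.2))
    = ∑ x : (Fin d → Fin K) × Fin K, w x.1 from
      Equiv.sum_comp e (fun x => w x.1)]
  rw [Fintype.sum_prod_type]
  simp [Finset.mul_sum]

theorem sum_pow_lower {d K : ℕ} (hK : 0 < K) (i₀ : Fin d) (w : (Fin d → Fin K) → ℝ)
    (hw : ∀ a, 0 ≤ w a) (W L : ℝ) (hW : 0 ≤ W) (hL : 0 ≤ L)
    (hline : ∀ a, W ≤ L * ∑ j, w (Function.update a i₀ j)) :
    W ^ d ≤ L ^ d * ∑ a, w a ^ d := by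
  obtain ⟨e, rfl⟩ : ∃ e, d = e + 1 := ⟨d - 1, by have := i₀.pos; omega⟩
  have hKr : (0 : ℝ) < K := by exact_mod_cast hK
  have h1 : (K : ℝ) ^ (e + 1) * W ≤ L * (K * ∑ a, w a) := by
    rw [← sum_update_lines i₀ w, Finset.mul_sum]
    calc (K : ℝ) ^ (e + 1) * W = ∑ a : Fin (e + 1) → Fin K, W := by simp
      _ ≤ _ := Finset.sum_le_sum fun a _ => hline a
  have h2 : (K : ℝ) ^ e * W ≤ L * ∑ a, w a := by
    have : (K : ℝ) * ((K : ℝ) ^ e * W) ≤ K * (L * ∑ a, w a) := by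
      calc _ = (K : ℝ) ^ (e + 1) * W := by ring
        _ ≤ _ := h1
        _ = _ := by ring
    exact le_of_mul_le_mul_left this hKr
  have h3 := pow_sum_div_card_le_sum_pow (s := Finset.univ) (f := w) (fun a _ => hw a) e
  have hcard : ((Finset.univ : Finset (Fin (e + 1) → Fin K)).card : ℝ) = (K : ℝ) ^ (e + 1) := by
    simp
  rw [hcard, div_le_iff₀ (by positivity)] at h3
  have h4 := pow_le_pow_left₀ (by positivity) h2 (e + 1)
  have h5 : ((K : ℝ) ^ (e + 1)) ^ e * W ^ (e + 1)
      ≤ ((K : ℝ) ^ (e + 1)) ^ e * (L ^ (e + 1) * ∑ a, w a ^ (e + 1)) := by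
    calc ((K : ℝ) ^ (e + 1)) ^ e * W ^ (e + 1) = ((K : ℝ) ^ e * W) ^ (e + 1) := by ring
      _ ≤ (L * ∑ a, w a) ^ (e + 1) := h4
      _ = L ^ (e + 1) * (∑ a, w a) ^ (e + 1) := by ring
      _ ≤ L ^ (e + 1) * ((∑ a, w a ^ (e + 1)) * ((K : ℝ) ^ (e + 1)) ^ e) := by gcongr
      _ = _ := by ring
  exact le_of_mul_le_mul_left h5 (by positivity)

theorem sum_rpow_lower {ι : Type*} {d : ℕ} (s : Finset ι) (w : ι → ℝ) (W B θ α : ℝ)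
    (hw : ∀ a ∈ s, 0 < w a) (hW : 0 < W) (hB : 0 ≤ B) (hθ : 0 < θ) (hαd : α < d)
    (hle : ∀ a ∈ s, w a ≤ θ * W) (hsum : W ^ d ≤ B * ∑ a ∈ s, w a ^ d)
    (hθB : B * θ ^ ((d : ℝ) - α) * 2 ^ d ≤ 1) :
    2 ^ d * W ^ α ≤ ∑ a ∈ s, w a ^ α := by
  have h1 : ∀ a ∈ s, w a ^ d ≤ (θ * W) ^ ((d : ℝ) - α) * w a ^ α := by
    intro a ha
    have : w a ^ d = w a ^ ((d : ℝ) - α) * w a ^ α := by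
      rw [← Real.rpow_add (hw a ha), sub_add_cancel, Real.rpow_natCast]
    rw [this]
    exact mul_le_mul_of_nonneg_right
      (Real.rpow_le_rpow (hw a ha).le (hle a ha) (by linarith))
      (Real.rpow_nonneg (hw a ha).le _)
  have h2 : W ^ d ≤ B * ((θ * W) ^ ((d : ℝ) - α) * ∑ a ∈ s, w a ^ α) := by
    refine hsum.trans (mul_le_mul_of_nonneg_left ?_ hB)
    rw [Finset.mul_sum]
    exact Finset.sum_le_sum h1
  have h0 : 0 ≤ ∑ a ∈ s, w a ^ α :=
    Finset.sum_nonneg fun a ha => Real.rpow_nonneg (hw a ha).le _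
  rw [Real.mul_rpow hθ.le hW.le] at h2
  have hWd : W ^ d = W ^ ((d : ℝ) - α) * W ^ α := by
    rw [← Real.rpow_add hW, sub_add_cancel, Real.rpow_natCast]
  have hpos : 0 < W ^ ((d : ℝ) - α) := Real.rpow_pos_of_pos hW _
  have h3 : W ^ ((d : ℝ) - α) * (2 ^ d * W ^ α) ≤ W ^ ((d : ℝ) - α) * ∑ a ∈ s, w a ^ α := by
    calc W ^ ((d : ℝ) - α) * (2 ^ d * W ^ α) = 2 ^ d * W ^ d := by rw [hWd]; ring
      _ ≤ 2 ^ d * (B * (θ ^ ((d : ℝ) - α) * W ^ ((d : ℝ) - α) * ∑ a ∈ s, w a ^ α)) := by gcongr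
      _ = (B * θ ^ ((d : ℝ) - α) * 2 ^ d) * (W ^ ((d : ℝ) - α) * ∑ a ∈ s, w a ^ α) := by ring
      _ ≤ 1 * (W ^ ((d : ℝ) - α) * ∑ a ∈ s, w a ^ α) := by gcongr
      _ = _ := one_mul _
  exact le_of_mul_le_mul_left h3 hpos

theorem chain_bound {Y : Type*} [PseudoMetricSpace Y] {K : ℕ} (hK : 0 < K) (p : Fin K → Y)
    (u : Fin K → ℝ) (hu : ∀ j, 0 ≤ u j)
    (h : ∀ j k : Fin K, (k : ℕ) = j + 1 → dist (p j) (p k) ≤ u j) :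
    dist (p ⟨0, hK⟩) (p ⟨K - 1, by omega⟩) ≤ ∑ j, u j := by
  let g : ℕ → Fin K := fun j => ⟨min j (K - 1), by omega⟩
  have h1 := dist_le_range_sum_dist (fun j => p (g j)) (K - 1)
  have e0 : g 0 = ⟨0, hK⟩ := by simp [g]
  have e1 : g (K - 1) = ⟨K - 1, by omega⟩ := by simp [g]
  rw [e0, e1] at h1
  refine h1.trans ?_
  calc ∑ i ∈ Finset.range (K - 1), dist (p (g i)) (p (g (i + 1)))
      ≤ ∑ i ∈ Finset.range (K - 1), u (g i) := by
        refine Finset.sum_le_sum fun i hi => h _ _ ?_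
        rw [Finset.mem_range] at hi
        simp only [g]
        omega
    _ ≤ ∑ i ∈ Finset.range K, u (g i) :=
        Finset.sum_le_sum_of_subset_of_nonneg (Finset.range_mono (by omega))
          fun _ _ _ => hu _
    _ = ∑ j : Fin K, u (g j) := (Fin.sum_univ_eq_sum_range (fun i => u (g i)) K).symm
    _ = ∑ j, u j := by
        refine Finset.sum_congr rfl fun j _ => ?_
        congr 1
        ext
        simp only [g]
        omega

theorem eu_dist_le {d : ℕ} {x y : EuclideanSpace ℝ (Fin d)} {M : ℝ} (hM : 0 ≤ M)
    (h : ∀ i, |x i - y i| ≤ M) : dist x y ≤ d * M := by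
  rw [EuclideanSpace.dist_eq]
  apply Real.sqrt_le_iff.2
  refine ⟨by positivity, ?_⟩
  calc ∑ i, dist (x i) (y i) ^ 2 ≤ ∑ i : Fin d, M ^ 2 := by
        refine Finset.sum_le_sum fun i _ => ?_
        rw [Real.dist_eq]
        exact pow_le_pow_left₀ (abs_nonneg _) (h i) 2
    _ = d * M ^ 2 := by simp
    _ ≤ (d * M) ^ 2 := by
        rw [mul_pow]
        have : (d : ℝ) ≤ (d : ℝ) ^ 2 := by
          exact_mod_cast Nat.le_self_pow two_ne_zero d
        gcongr

theorem eu_coord_le {d : ℕ} (x y : EuclideanSpace ℝ (Fin d)) (i : Fin d) :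
    |x i - y i| ≤ dist x y := by
  rw [dist_eq_norm]
  simpa using PiLp.norm_apply_le (x - y) i

theorem cube_dist_le {d : ℕ} {c : Fin d → ℝ} {l : ℝ} (hl : 0 ≤ l)
    {x y : EuclideanSpace ℝ (Fin d)} (hx : x ∈ cube c l) (hy : y ∈ cube c l) :
    dist x y ≤ d * l := by
  refine eu_dist_le hl fun i => ?_
  rw [abs_le]
  have := hx i
  have := hy i
  constructor <;> linarith

theorem cube_isClosed {d : ℕ} (c : Fin d → ℝ) (l : ℝ) : IsClosed (cube c l) := by
  have : cube c l = ⋂ i, {x : EuclideanSpace ℝ (Fin d) | c i ≤ x i ∧ x i ≤ c i + l} := by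
    ext x; simp [cube]
  rw [this]
  refine isClosed_iInter fun i => ?_
  have h1 : Continuous fun x : EuclideanSpace ℝ (Fin d) => x i := by fun_prop
  exact (isClosed_le continuous_const h1).inter (isClosed_le h1 continuous_const)

theorem cube_isCompact {d : ℕ} (c : Fin d → ℝ) {l : ℝ} (hl : 0 ≤ l) :
    IsCompact (cube c l) := by
  refine Metric.isCompact_of_isClosed_isBounded (cube_isClosed c l) ?_
  exact Metric.isBounded_iff.2 ⟨d * l, fun x hx y hy => cube_dist_le hl hx hy⟩

theorem cube_nonempty {d : ℕ} (c : Fin d → ℝ) {l : ℝ} (hl : 0 ≤ l) :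
    (cube c l).Nonempty := ⟨WithLp.toLp 2 c, fun i => by simp [hl]⟩

theorem fatSide_pos {N : ℕ} (hN : 2 ≤ N) (m n : ℕ) : 0 < fatSide N m n := by
  unfold fatSide; positivity

theorem fatSide_succ (N m n : ℕ) : fatSide N m n / ((N ^ m : ℕ) : ℝ) = fatSide N m (n + 1) := by
  unfold fatSide
  rw [mul_add, pow_add]
  push_cast
  rw [mul_inv, mul_one, div_eq_mul_inv]

theorem fat_children {d N m : ℕ} {𝓕 : ℕ → Set (Set (EuclideanSpace ℝ (Fin d)))}
    (h : IsFatCantorFamilies d N m 𝓕) {n : ℕ} {Q : Set (EuclideanSpace ℝ (Fin d))}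
    (hQ : Q ∈ 𝓕 n) : ∃ (c : Fin d → ℝ) (a₀ : Fin d → Fin (N ^ m)),
      Q = cube c (fatSide N m n) ∧ ∀ a, a ≠ a₀ →
      cube (childCorner c (fatSide N m n) (N ^ m) a) (fatSide N m (n + 1)) ∈ 𝓕 (n + 1) ∧
      cube (childCorner c (fatSide N m n) (N ^ m) a) (fatSide N m (n + 1)) ⊆ Q := by
  obtain ⟨c, hc, a₀, ha₀⟩ := h.2.1 n Q hQ
  refine ⟨c, a₀, hc, fun a ha => ?_⟩
  have : cube (childCorner c (fatSide N m n) (N ^ m) a) (fatSide N m (n + 1)) ∈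
    {Q' ∈ 𝓕 (n + 1) | Q' ⊆ Q} := by
    rw [ha₀]; exact ⟨a, ha, rfl⟩
  exact this

theorem mem_child {d N m n : ℕ} {c : Fin d → ℝ} {a : Fin d → Fin (N ^ m)}
    {x : EuclideanSpace ℝ (Fin d)}
    (hx : x ∈ cube (childCorner c (fatSide N m n) (N ^ m) a) (fatSide N m (n + 1))) (i : Fin d) :
    c i + fatSide N m (n + 1) * (a i : ℝ) ≤ x i ∧
    x i ≤ c i + fatSide N m (n + 1) * ((a i : ℝ) + 1) := by
  have := hx i
  simp only [childCorner, fatSide_succ] at this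
  refine ⟨this.1, by linarith [this.2]⟩

theorem fat_nested {d N m : ℕ} (hN : 2 ≤ N)
    {𝓕 : ℕ → Set (Set (EuclideanSpace ℝ (Fin d)))}
    (h : IsFatCantorFamilies d N m 𝓕) (q : ℕ → ℕ × Set (EuclideanSpace ℝ (Fin d)))
    (hq : ∀ k, (q k).2 ∈ 𝓕 (q k).1) (hs : ∀ k, (q (k + 1)).1 = (q k).1 + 1)
    (hsub : ∀ k, (q (k + 1)).2 ⊆ (q k).2) :
    ∃ x ∈ ⋂ n, ⋃₀ 𝓕 n, ∀ k, x ∈ (q k).2 := by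
  have hcube : ∀ k, ∃ c, (q k).2 = cube c (fatSide N m (q k).1) := fun k => by
    obtain ⟨c, _, hc, _⟩ := fat_children h (hq k)
    exact ⟨c, hc⟩
  have hne : (⋂ k, (q k).2).Nonempty := by
    refine IsCompact.nonempty_iInter_of_sequence_nonempty_isCompact_isClosed _ hsub ?_ ?_ ?_
    · intro k
      obtain ⟨c, hc⟩ := hcube k
      rw [hc]; exact cube_nonempty c (fatSide_pos hN _ _).le
    · obtain ⟨c, hc⟩ := hcube 0
      rw [hc]; exact cube_isCompact c (fatSide_pos hN _ _).le
    · intro k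
      obtain ⟨c, hc⟩ := hcube k
      rw [hc]; exact cube_isClosed c _
  obtain ⟨x, hx⟩ := hne
  rw [Set.mem_iInter] at hx
  refine ⟨x, ?_, hx⟩
  rw [Set.mem_iInter]
  have hanti : Antitone fun n => ⋃₀ 𝓕 n := by
    refine antitone_nat_of_succ_le fun n => ?_
    rintro y ⟨Q', hQ', hy⟩
    obtain ⟨Q, hQ, hQQ⟩ := h.2.2 n Q' hQ'
    exact ⟨Q, hQ, hQQ hy⟩
  have hk : ∀ k, k ≤ (q k).1 := by
    intro k
    induction k with
    | zero => exact Nat.zero_le _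
    | succ k ih => rw [hs]; omega
  intro n
  exact hanti (hk n) ⟨_, hq n, hx n⟩

theorem fat_nonempty {d N m : ℕ} (hd : 1 ≤ d) (hN : 2 ≤ N) (hK : 8 ≤ N ^ m)
    {𝓕 : ℕ → Set (Set (EuclideanSpace ℝ (Fin d)))}
    (h : IsFatCantorFamilies d N m 𝓕) {n : ℕ} {Q : Set (EuclideanSpace ℝ (Fin d))}
    (hQ : Q ∈ 𝓕 n) : ((⋂ n, ⋃₀ 𝓕 n) ∩ Q).Nonempty := by
  have step : ∀ t : {t : ℕ × Set (EuclideanSpace ℝ (Fin d)) // t.2 ∈ 𝓕 t.1},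
      ∃ t' : {t : ℕ × Set (EuclideanSpace ℝ (Fin d)) // t.2 ∈ 𝓕 t.1},
        t'.1.1 = t.1.1 + 1 ∧ t'.1.2 ⊆ t.1.2 := by
    rintro ⟨⟨k, P⟩, hP⟩
    obtain ⟨c, a₀, hc, ha⟩ := fat_children h hP
    have : Nontrivial (Fin (N ^ m)) := Fin.nontrivial_iff_two_le.2 (by omega)
    have : Nonempty (Fin d) := ⟨⟨0, hd⟩⟩
    obtain ⟨a, hane⟩ := exists_ne a₀
    exact ⟨⟨⟨k + 1, _⟩, (ha a hane).1⟩, rfl, (ha a hane).2⟩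
  choose nxt h1 h2 using step
  set q : ℕ → {t : ℕ × Set (EuclideanSpace ℝ (Fin d)) // t.2 ∈ 𝓕 t.1} :=
    fun k => nxt^[k] ⟨⟨n, Q⟩, hQ⟩ with hq
  have hqs : ∀ k, q (k + 1) = nxt (q k) := fun k => by
    simp only [hq, Function.iterate_succ_apply']
  obtain ⟨x, hxF, hx⟩ := fat_nested hN h (fun k => (q k).1) (fun k => (q k).2)
    (fun k => by simp only [hqs, h1]) (fun k => by simp only [hqs]; exact h2 _)
  exact ⟨x, hxF, hx 0⟩

/-- Each cube of the construction contains, for every point of `F` in it,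
another point of `F` far away. -/
theorem fat_far {d N m : ℕ} (hd : 1 ≤ d) (hN : 2 ≤ N) (hK : 8 ≤ N ^ m)
    {𝓕 : ℕ → Set (Set (EuclideanSpace ℝ (Fin d)))}
    (h : IsFatCantorFamilies d N m 𝓕) {n : ℕ} {Q : Set (EuclideanSpace ℝ (Fin d))}
    (hQ : Q ∈ 𝓕 n) (x : EuclideanSpace ℝ (Fin d)) :
    ∃ z ∈ (⋂ n, ⋃₀ 𝓕 n) ∩ Q, fatSide N m n / 4 ≤ dist x z := by
  obtain ⟨c, a₀, hc, ha⟩ := fat_children h hQ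
  have hl := fatSide_pos hN m n
  have hl' := fatSide_pos hN m (n + 1)
  have hll : fatSide N m n = fatSide N m (n + 1) * ((N ^ m : ℕ) : ℝ) := by
    rw [← fatSide_succ]; field_simp
  have hK' : (8 : ℝ) ≤ ((N ^ m : ℕ) : ℝ) := by exact_mod_cast hK
  have pick : ∀ j k : Fin (N ^ m), j ≠ k → ∃ r : Fin (N ^ m), (r = j ∨ r = k) ∧
      (fun _ : Fin d => r) ≠ a₀ := by
    intro j k hjk
    by_cases h0 : (fun _ : Fin d => j) = a₀
    · refine ⟨k, Or.inr rfl, fun h1 => hjk ?_⟩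
      exact congrFun (h0.trans h1.symm) ⟨0, hd⟩
    · exact ⟨j, Or.inl rfl, h0⟩
  have hpt : ∀ r : Fin (N ^ m), (fun _ : Fin d => r) ≠ a₀ → ∃ z ∈ (⋂ n, ⋃₀ 𝓕 n) ∩ Q,
      c ⟨0, hd⟩ + fatSide N m (n + 1) * (r : ℝ) ≤ z ⟨0, hd⟩ ∧
      z ⟨0, hd⟩ ≤ c ⟨0, hd⟩ + fatSide N m (n + 1) * ((r : ℝ) + 1) := by
    intro r hr
    obtain ⟨z, hzF, hz⟩ := fat_nonempty hd hN hK h (ha _ hr).1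
    exact ⟨z, ⟨hzF, (ha _ hr).2 hz⟩, mem_child hz ⟨0, hd⟩⟩
  obtain ⟨r1, hr1, hr1'⟩ := pick ⟨0, by omega⟩ ⟨1, by omega⟩ (by simp)
  obtain ⟨r2, hr2, hr2'⟩ := pick ⟨N ^ m - 2, by omega⟩ ⟨N ^ m - 1, by omega⟩
    (by simp only [ne_eq, Fin.mk.injEq]; omega)
  obtain ⟨z1, hz1, -, hb1⟩ := hpt r1 hr1'
  obtain ⟨z2, hz2, hb2, -⟩ := hpt r2 hr2'
  have e1 : (r1 : ℝ) ≤ 1 := by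
    have : (r1 : ℕ) ≤ 1 := by rcases hr1 with rfl | rfl <;> simp
    exact_mod_cast this
  have e2 : ((N ^ m : ℕ) : ℝ) ≤ (r2 : ℝ) + 2 := by
    have : N ^ m ≤ (r2 : ℕ) + 2 := by rcases hr2 with rfl | rfl <;> simp <;> omega
    exact_mod_cast this
  have hz12 : fatSide N m n / 2 ≤ dist z1 z2 := by
    have h3 := eu_coord_le z1 z2 ⟨0, hd⟩
    have h4 := neg_abs_le (z1 ⟨0, hd⟩ - z2 ⟨0, hd⟩)
    have h5 : fatSide N m (n + 1) * (((N ^ m : ℕ) : ℝ) - 4)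
        ≤ fatSide N m (n + 1) * ((r2 : ℝ) - (r1 + 1)) :=
      mul_le_mul_of_nonneg_left (by linarith) hl'.le
    have h6 : fatSide N m (n + 1) * 8 ≤ fatSide N m (n + 1) * ((N ^ m : ℕ) : ℝ) := by gcongr
    rw [hll]
    nlinarith
  have htri := dist_triangle_left z1 z2 x
  by_cases h7 : fatSide N m n / 4 ≤ dist x z1
  · exact ⟨z1, hz1, h7⟩
  · exact ⟨z2, hz2, by linarith⟩

theorem IsDistortion.mono {η : ℝ → ℝ} (h : IsDistortion η) {s t : ℝ} (hs : 0 ≤ s) (hst : s ≤ t) :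
    η s ≤ η t := h.2.1.monotoneOn hs (hs.trans hst) hst

theorem IsDistortion.nonneg {η : ℝ → ℝ} (h : IsDistortion η) {s : ℝ} (hs : 0 ≤ s) : 0 ≤ η s := by
  rw [← h.2.2.1]; exact h.mono le_rfl hs

theorem IsDistortion.pos {η : ℝ → ℝ} (h : IsDistortion η) {s : ℝ} (hs : 0 < s) : 0 < η s := by
  rw [← h.2.2.1]; exact h.2.1 (Set.mem_Ici.2 le_rfl) (Set.mem_Ici.2 hs.le) hs

theorem qs_le {X Y : Type*} [MetricSpace X] [MetricSpace Y] {η : ℝ → ℝ} (hη : IsDistortion η)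
    {f : X → Y} {F : Set X} (hf : IsQSOn η f F) {x y z : X} (hx : x ∈ F) (hy : y ∈ F) (hz : z ∈ F)
    {t : ℝ} (hpos : 0 < dist x z) (h : dist x y ≤ t * dist x z) :
    dist (f x) (f y) ≤ η t * dist (f x) (f z) := by
  refine (hf.2 x hx y hy z hz (dist_pos.1 hpos)).trans ?_
  refine mul_le_mul_of_nonneg_right ?_ dist_nonneg
  exact hη.mono (by positivity) ((div_le_iff₀ hpos).2 h)

theorem fam_dist_le {d N m : ℕ} (hN : 2 ≤ N)
    {𝓕 : ℕ → Set (Set (EuclideanSpace ℝ (Fin d)))}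
    (h : IsFatCantorFamilies d N m 𝓕) {n : ℕ} {Q : Set (EuclideanSpace ℝ (Fin d))}
    (hQ : Q ∈ 𝓕 n) {x y : EuclideanSpace ℝ (Fin d)} (hx : x ∈ Q) (hy : y ∈ Q) :
    dist x y ≤ d * fatSide N m n := by
  obtain ⟨c, _, hc, _⟩ := fat_children h hQ
  rw [hc] at hx hy
  exact cube_dist_le (fatSide_pos hN m n).le hx hy

/-- Size of the image of the part of `F` in `Q`. -/
noncomputable def imgSize {d : ℕ} {Y : Type} [MetricSpace Y] (F : Set (EuclideanSpace ℝ (Fin d)))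
    (f : EuclideanSpace ℝ (Fin d) → Y) (Q : Set (EuclideanSpace ℝ (Fin d))) : ℝ :=
  Metric.diam (f '' (F ∩ Q))

theorem img_bounded
    {d N m : ℕ} (hd : 1 ≤ d) (hN : 2 ≤ N) (hK : 8 ≤ N ^ m)
    {𝓕 : ℕ → Set (Set (EuclideanSpace ℝ (Fin d)))}
    (h : IsFatCantorFamilies d N m 𝓕) {n : ℕ} {Q : Set (EuclideanSpace ℝ (Fin d))}
    (hQ : Q ∈ 𝓕 n) {η : ℝ → ℝ} (hη : IsDistortion η) {Y : Type} [MetricSpace Y]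
    {f : EuclideanSpace ℝ (Fin d) → Y} (hf : IsQSOn η f (⋂ n, ⋃₀ 𝓕 n)) : Bornology.IsBounded (f '' ((⋂ n, ⋃₀ 𝓕 n) ∩ Q)) := by
  obtain ⟨x, hxF, hxQ⟩ := fat_nonempty hd hN hK h hQ
  obtain ⟨z, ⟨hzF, hzQ⟩, hz⟩ := fat_far hd hN hK h hQ x
  have hl := fatSide_pos hN m n
  refine (Metric.isBounded_iff_subset_closedBall (f x)).2
    ⟨η (4 * d) * dist (f x) (f z), ?_⟩
  rintro _ ⟨y, ⟨hyF, hyQ⟩, rfl⟩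
  rw [Metric.mem_closedBall, dist_comm]
  refine qs_le hη hf hxF hyF hzF (by linarith) ?_
  have h1 := fam_dist_le hN h hQ hxQ hyQ
  have h2 : (d : ℝ) * (fatSide N m n / 4) ≤ d * dist x z := by gcongr
  linarith

theorem img_dist_le
    {d N m : ℕ} (hd : 1 ≤ d) (hN : 2 ≤ N) (hK : 8 ≤ N ^ m)
    {𝓕 : ℕ → Set (Set (EuclideanSpace ℝ (Fin d)))}
    (h : IsFatCantorFamilies d N m 𝓕) {n : ℕ} {Q : Set (EuclideanSpace ℝ (Fin d))}
    (hQ : Q ∈ 𝓕 n) {η : ℝ → ℝ} (hη : IsDistortion η) {Y : Type} [MetricSpace Y]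
    {f : EuclideanSpace ℝ (Fin d) → Y} (hf : IsQSOn η f (⋂ n, ⋃₀ 𝓕 n)) {x y : EuclideanSpace ℝ (Fin d)} (hxF : x ∈ ⋂ n, ⋃₀ 𝓕 n) (hxQ : x ∈ Q)
    (hyF : y ∈ ⋂ n, ⋃₀ 𝓕 n) (hyQ : y ∈ Q) :
    dist (f x) (f y) ≤ imgSize (⋂ n, ⋃₀ 𝓕 n) f Q :=
  Metric.dist_le_diam_of_mem (img_bounded hd hN hK h hQ hη hf)
    (Set.mem_image_of_mem f ⟨hxF, hxQ⟩) (Set.mem_image_of_mem f ⟨hyF, hyQ⟩)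

theorem img_pos
    {d N m : ℕ} (hd : 1 ≤ d) (hN : 2 ≤ N) (hK : 8 ≤ N ^ m)
    {𝓕 : ℕ → Set (Set (EuclideanSpace ℝ (Fin d)))}
    (h : IsFatCantorFamilies d N m 𝓕) {n : ℕ} {Q : Set (EuclideanSpace ℝ (Fin d))}
    (hQ : Q ∈ 𝓕 n) {η : ℝ → ℝ} (hη : IsDistortion η) {Y : Type} [MetricSpace Y]
    {f : EuclideanSpace ℝ (Fin d) → Y} (hf : IsQSOn η f (⋂ n, ⋃₀ 𝓕 n)) : 0 < imgSize (⋂ n, ⋃₀ 𝓕 n) f Q := by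
  obtain ⟨x, hxF, hxQ⟩ := fat_nonempty hd hN hK h hQ
  obtain ⟨z, ⟨hzF, hzQ⟩, hz⟩ := fat_far hd hN hK h hQ x
  have hl := fatSide_pos hN m n
  refine lt_of_lt_of_le ?_ (img_dist_le hd hN hK h hQ hη hf hxF hxQ hzF hzQ)
  rw [dist_pos]
  intro he
  have := hf.1 hxF hzF he
  rw [this, dist_self] at hz
  linarith

theorem img_upper
    {d N m : ℕ} (hd : 1 ≤ d) (hN : 2 ≤ N) (hK : 8 ≤ N ^ m)
    {𝓕 : ℕ → Set (Set (EuclideanSpace ℝ (Fin d)))}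
    (h : IsFatCantorFamilies d N m 𝓕) {n : ℕ} {Q : Set (EuclideanSpace ℝ (Fin d))}
    (hQ : Q ∈ 𝓕 n) {η : ℝ → ℝ} (hη : IsDistortion η) {Y : Type} [MetricSpace Y]
    {f : EuclideanSpace ℝ (Fin d) → Y} (hf : IsQSOn η f (⋂ n, ⋃₀ 𝓕 n)) {x y : EuclideanSpace ℝ (Fin d)} (hxF : x ∈ ⋂ n, ⋃₀ 𝓕 n) (hxQ : x ∈ Q)
    (hyF : y ∈ ⋂ n, ⋃₀ 𝓕 n) {t : ℝ} (ht : 0 ≤ t) (hxy : dist x y ≤ t * (fatSide N m n / 4)) :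
    dist (f x) (f y) ≤ η t * imgSize (⋂ n, ⋃₀ 𝓕 n) f Q := by
  obtain ⟨z, ⟨hzF, hzQ⟩, hz⟩ := fat_far hd hN hK h hQ x
  have hl := fatSide_pos hN m n
  refine (qs_le hη hf hxF hyF hzF (t := t) (by linarith) (hxy.trans (by gcongr))).trans ?_
  exact mul_le_mul_of_nonneg_left (img_dist_le hd hN hK h hQ hη hf hxF hxQ hzF hzQ)
    (hη.nonneg ht)

theorem img_lower
    {d N m : ℕ} (hd : 1 ≤ d) (hN : 2 ≤ N)
    {𝓕 : ℕ → Set (Set (EuclideanSpace ℝ (Fin d)))}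
    (h : IsFatCantorFamilies d N m 𝓕) {n : ℕ} {Q : Set (EuclideanSpace ℝ (Fin d))}
    (hQ : Q ∈ 𝓕 n) {η : ℝ → ℝ} (hη : IsDistortion η) {Y : Type} [MetricSpace Y]
    {f : EuclideanSpace ℝ (Fin d) → Y} (hf : IsQSOn η f (⋂ n, ⋃₀ 𝓕 n)) {x y : EuclideanSpace ℝ (Fin d)} (hxF : x ∈ ⋂ n, ⋃₀ 𝓕 n) (hxQ : x ∈ Q)
    (hyF : y ∈ ⋂ n, ⋃₀ 𝓕 n) {s : ℝ} (hs : 0 < s) (hxy : d * fatSide N m n ≤ s * dist x y) :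
    imgSize (⋂ n, ⋃₀ 𝓕 n) f Q ≤ 2 * η s * dist (f x) (f y) := by
  have hl := fatSide_pos hN m n
  have hd' : (0 : ℝ) < d := by exact_mod_cast hd
  have hpos : 0 < dist x y := by
    have : 0 < s * dist x y := lt_of_lt_of_le (by positivity) hxy
    exact pos_of_mul_pos_right this hs.le
  have key : ∀ u, u ∈ ⋂ n, ⋃₀ 𝓕 n → u ∈ Q → dist (f x) (f u) ≤ η s * dist (f x) (f y) :=
    fun u huF huQ => qs_le hη hf hxF huF hyF hpos
      ((fam_dist_le hN h hQ hxQ huQ).trans hxy)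
  have hn := hη.nonneg hs.le
  refine Metric.diam_le_of_forall_dist_le (by positivity) ?_
  rintro _ ⟨u, ⟨huF, huQ⟩, rfl⟩ _ ⟨v, ⟨hvF, hvQ⟩, rfl⟩
  have h1 := dist_triangle_left (f u) (f v) (f x)
  linarith [key u huF huQ, key v hvF hvQ]

theorem one_scale
    {d N m : ℕ} (hd : 1 ≤ d) (hN : 2 ≤ N) (hK : 8 ≤ N ^ m)
    {𝓕 : ℕ → Set (Set (EuclideanSpace ℝ (Fin d)))}
    (h : IsFatCantorFamilies d N m 𝓕) {n : ℕ} {Q : Set (EuclideanSpace ℝ (Fin d))}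
    (hQ : Q ∈ 𝓕 n) {η : ℝ → ℝ} (hη : IsDistortion η) {Y : Type} [MetricSpace Y]
    {f : EuclideanSpace ℝ (Fin d) → Y} (hf : IsQSOn η f (⋂ n, ⋃₀ 𝓕 n)) {α θ : ℝ} (hαd : α < d) (hθ : 0 < θ) (hθ2 : θ ≤ 1 / 2)
    (hθη : η (4 * d / ((N ^ m : ℕ) : ℝ)) ≤ θ)
    (hθB : (2 * (2 * η (16 * d) ^ 2) ^ d) * θ ^ ((d : ℝ) - α) * 2 ^ d ≤ 1) :
    ∃ (ι : Type) (s : Finset ι) (q : ι → Set (EuclideanSpace ℝ (Fin d))),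
      (∀ i ∈ s, q i ∈ 𝓕 (n + 1) ∧ q i ⊆ Q ∧
        imgSize (⋂ n, ⋃₀ 𝓕 n) f (q i) ≤ imgSize (⋂ n, ⋃₀ 𝓕 n) f Q / 2) ∧
      (∀ i ∈ s, ∀ j ∈ s, i ≠ j → ∀ y ∈ f '' ((⋂ n, ⋃₀ 𝓕 n) ∩ q i),
        ∀ z ∈ f '' ((⋂ n, ⋃₀ 𝓕 n) ∩ q j),
        (4 * η (4 * d * ((N ^ m : ℕ) : ℝ)) * η (16 * d))⁻¹ * imgSize (⋂ n, ⋃₀ 𝓕 n) f Q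
          ≤ dist y z) ∧
      imgSize (⋂ n, ⋃₀ 𝓕 n) f Q ^ α ≤ ∑ i ∈ s, imgSize (⋂ n, ⋃₀ 𝓕 n) f (q i) ^ α := by
  obtain ⟨c, a₀, hc, ha⟩ := fat_children h hQ
  have hl := fatSide_pos hN m n
  have hl' := fatSide_pos hN m (n + 1)
  have hK' : (8 : ℝ) ≤ ((N ^ m : ℕ) : ℝ) := by exact_mod_cast hK
  have hll : fatSide N m n = fatSide N m (n + 1) * ((N ^ m : ℕ) : ℝ) := by
    rw [← fatSide_succ]; field_simp
  have hd1 : (1 : ℝ) ≤ d := by exact_mod_cast hd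
  have hd0 : (0 : ℝ) < d := by linarith
  generalize hHdef : η (16 * (d : ℝ)) = H at *
  have hH : 0 < H := by rw [← hHdef]; exact hη.pos (by linarith)
  generalize hFdef : (⋂ n, ⋃₀ 𝓕 n) = F at *
  generalize hGdef : η (4 * d * ((N ^ m : ℕ) : ℝ)) = G at *
  have hG : 0 < G := by rw [← hGdef]; exact hη.pos (by positivity)
  set q : (Fin d → Fin (N ^ m)) → Set (EuclideanSpace ℝ (Fin d)) := fun a =>
    cube (childCorner c (fatSide N m n) (N ^ m) a) (fatSide N m (n + 1)) with hqdef
  set W := imgSize F f Q with hWdef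
  set w : (Fin d → Fin (N ^ m)) → ℝ := fun a => imgSize F f (q a) with hwdef
  have hW : 0 < W := by subst hFdef; exact img_pos hd hN hK h hQ hη hf
  have hwpos : ∀ a, a ≠ a₀ → 0 < w a := by
    intro a haa; subst hFdef; exact img_pos hd hN hK h (ha a haa).1 hη hf
  have hwθ : ∀ a, a ≠ a₀ → w a ≤ θ * W := by
    intro a haa
    refine Metric.diam_le_of_forall_dist_le (by positivity) ?_
    rintro _ ⟨x, ⟨hxF, hxQ⟩, rfl⟩ _ ⟨y, ⟨hyF, hyQ⟩, rfl⟩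
    have h1 := fam_dist_le hN h (ha a haa).1 hxQ hyQ
    have h2 : dist (f x) (f y) ≤ η (4 * d / ((N ^ m : ℕ) : ℝ)) * W := by
      subst hFdef
      refine img_upper hd hN hK h hQ hη hf hxF ((ha a haa).2 hxQ) hyF (by positivity) ?_
      refine h1.trans (le_of_eq ?_)
      rw [hll]; field_simp
    exact h2.trans (by gcongr)
  have hwlow : ∀ a, a ≠ a₀ → W ≤ 2 * G * w a := by
    intro a haa
    subst hFdef
    obtain ⟨x, hxF, hxQ⟩ := fat_nonempty hd hN hK h (ha a haa).1
    obtain ⟨z, ⟨hzF, hzQ⟩, hz⟩ := fat_far hd hN hK h (ha a haa).1 x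
    have h1 : W ≤ 2 * G * dist (f x) (f z) := by
      rw [← hGdef]
      refine img_lower hd hN h hQ hη hf hxF ((ha a haa).2 hxQ) hzF (by positivity) ?_
      calc d * fatSide N m n = 4 * d * ((N ^ m : ℕ) : ℝ) * (fatSide N m (n + 1) / 4) := by
            rw [hll]; ring
        _ ≤ _ := by gcongr
    refine h1.trans ?_
    exact mul_le_mul_of_nonneg_left
      (img_dist_le hd hN hK h (ha a haa).1 hη hf hxF hxQ hzF hzQ) (by positivity)
  -- the neighbour of the removed cube
  let i₀ : Fin d := ⟨0, hd⟩
  obtain ⟨b₀, hb₀, hb₀'⟩ : ∃ b₀ : Fin d → Fin (N ^ m), b₀ ≠ a₀ ∧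
      ∀ i, (b₀ i : ℕ) ≤ a₀ i + 1 ∧ (a₀ i : ℕ) ≤ b₀ i + 1 := by
    let v : Fin (N ^ m) := if (a₀ i₀ : ℕ) = 0 then ⟨1, by omega⟩ else
      ⟨(a₀ i₀ : ℕ) - 1, by omega⟩
    have hv : (v : ℕ) ≠ a₀ i₀ ∧ (v : ℕ) ≤ a₀ i₀ + 1 ∧ (a₀ i₀ : ℕ) ≤ v + 1 := by
      simp only [v]
      split_ifs with h0
      · simp only [h0]; omega
      · simp only; omega
    refine ⟨Function.update a₀ i₀ v, fun he => hv.1 ?_, fun i => ?_⟩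
    · have := congrFun he i₀
      rw [Function.update_self] at this
      rw [this]
    · by_cases hi : i = i₀
      · subst hi
        rw [Function.update_self]
        exact hv.2
      · rw [Function.update_of_ne hi]
        omega
  let r : (Fin d → Fin (N ^ m)) → (Fin d → Fin (N ^ m)) := fun a => if a = a₀ then b₀ else a
  have hr0 : ∀ a, r a ≠ a₀ := by
    intro a
    simp only [r]
    split_ifs with h0
    · exact hb₀
    · exact h0
  have hr1 : ∀ a i, ((r a i : ℕ) : ℝ) ≤ (a i : ℕ) + 1 ∧ ((a i : ℕ) : ℝ) ≤ (r a i : ℕ) + 1 := by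
    intro a i
    have : (r a i : ℕ) ≤ a i + 1 ∧ (a i : ℕ) ≤ r a i + 1 := by
      simp only [r]
      split_ifs with h0
      · rw [h0]; exact hb₀' i
      · omega
    exact_mod_cast this
  have hp : ∀ a, ∃ x, x ∈ F ∧ x ∈ q (r a) := by
    intro a
    subst hFdef
    obtain ⟨x, hx⟩ := fat_nonempty hd hN hK h (ha _ (hr0 a)).1
    exact ⟨x, hx⟩
  choose p hpF hpq using hp
  have hpc : ∀ a i, c i + fatSide N m (n + 1) * ((a i : ℕ) - 1 : ℝ) ≤ p a i ∧
      p a i ≤ c i + fatSide N m (n + 1) * ((a i : ℕ) + 2 : ℝ) := by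
    intro a i
    obtain ⟨h1, h2⟩ := mem_child (hpq a) i
    obtain ⟨h3, h4⟩ := hr1 a i
    constructor
    · linarith [mul_le_mul_of_nonneg_left h4 hl'.le]
    · linarith [mul_le_mul_of_nonneg_left h3 hl'.le]
  have hline : ∀ a, W ≤ (2 * H ^ 2) * ∑ j, w (r (Function.update a i₀ j)) := by
    intro a
    have hchain := chain_bound (K := N ^ m) (by omega)
      (fun j => f (p (Function.update a i₀ j)))
      (fun j => H * w (r (Function.update a i₀ j)))
      (fun j => mul_nonneg hH.le (hwpos _ (hr0 _)).le) (by
        intro j k hjk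
        have hcl : dist (p (Function.update a i₀ j)) (p (Function.update a i₀ k))
            ≤ d * (4 * fatSide N m (n + 1)) := by
          refine eu_dist_le (by positivity) fun i => ?_
          obtain ⟨h1, h2⟩ := hpc (Function.update a i₀ j) i
          obtain ⟨h3, h4⟩ := hpc (Function.update a i₀ k) i
          by_cases hi : i = i₀
          · rw [hi] at h1 h2 h3 h4 ⊢
            rw [Function.update_self] at h1 h2 h3 h4
            rw [hjk] at h3 h4
            push_cast at h3 h4
            rw [abs_le]
            constructor <;> nlinarith
          · rw [Function.update_of_ne hi] at h1 h2 h3 h4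
            rw [abs_le]
            constructor <;> nlinarith
        rw [← hHdef]
        subst hFdef
        refine img_upper hd hN hK h (ha _ (hr0 _)).1 hη hf (hpF _) (hpq _) (hpF _)
          (by positivity) (hcl.trans (le_of_eq ?_))
        ring)
    have hends : W ≤ 2 * H * dist (f (p (Function.update a i₀ ⟨0, by omega⟩)))
        (f (p (Function.update a i₀ ⟨N ^ m - 1, by omega⟩))) := by
      have h1 := (hpc (Function.update a i₀ ⟨0, by omega⟩) i₀).2
      have h2 := (hpc (Function.update a i₀ ⟨N ^ m - 1, by omega⟩) i₀).1
      rw [Function.update_self] at h1 h2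
      simp only at h1 h2
      rw [Nat.cast_sub (by omega)] at h2
      have h3 := eu_coord_le (p (Function.update a i₀ ⟨0, by omega⟩))
        (p (Function.update a i₀ ⟨N ^ m - 1, by omega⟩)) i₀
      have h4 := neg_abs_le ((p (Function.update a i₀ ⟨0, by omega⟩)) i₀ -
        (p (Function.update a i₀ ⟨N ^ m - 1, by omega⟩)) i₀)
      have h6 : fatSide N m (n + 1) * 8 ≤ fatSide N m (n + 1) * ((N ^ m : ℕ) : ℝ) := by gcongr
      have h5 : fatSide N m n / 2 ≤ dist (p (Function.update a i₀ ⟨0, by omega⟩))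
          (p (Function.update a i₀ ⟨N ^ m - 1, by omega⟩)) := by
        rw [hll]
        push_cast at *
        nlinarith
      rw [← hHdef]
      subst hFdef
      refine img_lower hd hN h hQ hη hf (hpF _) ((ha _ (hr0 _)).2 (hpq _)) (hpF _)
        (by positivity) ?_
      calc (d : ℝ) * fatSide N m n ≤ 16 * d * (fatSide N m n / 2) := by nlinarith
        _ ≤ _ := by gcongr
    refine hends.trans ?_
    calc _ ≤ 2 * H * ∑ j, H * w (r (Function.update a i₀ j)) := by gcongr
      _ = _ := by rw [← Finset.mul_sum]; ring
  have hsum1 := sum_pow_lower (by omega : 0 < N ^ m) i₀ (fun a => w (r a))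
    (fun a => (hwpos _ (hr0 a)).le) W (2 * H ^ 2) hW.le (by positivity) hline
  set s : Finset (Fin d → Fin (N ^ m)) := Finset.univ.erase a₀ with hs
  have hms : ∀ a ∈ s, a ≠ a₀ := fun a h0 => (Finset.mem_erase.1 h0).1
  have hsum2 : ∑ a, w (r a) ^ d ≤ 2 * ∑ a ∈ s, w a ^ d := by
    rw [← Finset.add_sum_erase Finset.univ _ (Finset.mem_univ a₀)]
    have e1 : w (r a₀) ^ d ≤ ∑ a ∈ s, w a ^ d := by
      have : r a₀ = b₀ := by simp [r]
      rw [this]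
      exact Finset.single_le_sum (f := fun a => w a ^ d)
        (fun a h0 => pow_nonneg (hwpos a (hms a h0)).le d) (Finset.mem_erase.2 ⟨hb₀, Finset.mem_univ _⟩)
    have e2 : ∑ a ∈ Finset.univ.erase a₀, w (r a) ^ d = ∑ a ∈ s, w a ^ d := by
      refine Finset.sum_congr rfl fun a h0 => ?_
      simp [r, hms a h0]
    rw [e2]
    linarith
  have hsum3 : W ^ d ≤ (2 * (2 * H ^ 2) ^ d) * ∑ a ∈ s, w a ^ d := by
    refine hsum1.trans ?_
    calc _ ≤ (2 * H ^ 2) ^ d * (2 * ∑ a ∈ s, w a ^ d) := by gcongr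
      _ = _ := by ring
  have hsum4 := sum_rpow_lower s w W _ θ α (fun a h0 => hwpos a (hms a h0)) hW (by positivity) hθ
    hαd (fun a h0 => hwθ a (hms a h0)) hsum3 hθB
  let κ : (Fin d → Fin (N ^ m)) → (Fin d → Fin 2) := fun a i =>
    ⟨(a i : ℕ) % 2, Nat.mod_lt _ two_pos⟩
  obtain ⟨y, -, hy⟩ := Finset.exists_le_sum_fiber_of_maps_to_of_nsmul_le_sum
    (s := s) (t := Finset.univ) (f := κ) (w := fun a => w a ^ α) (b := W ^ α)
    (fun a _ => Finset.mem_univ _) Finset.univ_nonempty (by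
      rw [nsmul_eq_mul]
      simpa using hsum4)
  refine ⟨_, s.filter (fun a => κ a = y), q, ?_, ?_, hy⟩
  · intro a h0
    have haa := hms a (Finset.mem_filter.1 h0).1
    refine ⟨(ha a haa).1, (ha a haa).2, (hwθ a haa).trans ?_⟩
    nlinarith
  · rintro a h0 b h1 hab _ ⟨x, ⟨hxF, hxQ⟩, rfl⟩ _ ⟨z, ⟨hzF, hzQ⟩, rfl⟩
    obtain ⟨h0s, h0κ⟩ := Finset.mem_filter.1 h0
    obtain ⟨h1s, h1κ⟩ := Finset.mem_filter.1 h1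
    obtain ⟨k, hk⟩ := Function.ne_iff.1 hab
    have hmod : (a k : ℕ) % 2 = (b k : ℕ) % 2 := by
      have := congrFun (h0κ.trans h1κ.symm) k
      simpa [κ] using this
    have hne : (a k : ℕ) ≠ b k := fun he => hk (Fin.ext he)
    have hdist : fatSide N m (n + 1) ≤ dist x z := by
      refine le_trans ?_ (eu_coord_le x z k)
      obtain ⟨e1, e2⟩ := mem_child hxQ k
      obtain ⟨e3, e4⟩ := mem_child hzQ k
      rcases (by omega : (a k : ℕ) + 2 ≤ b k ∨ (b k : ℕ) + 2 ≤ a k) with hlt | hlt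
      · have hlt' : ((a k : ℕ) : ℝ) + 2 ≤ (b k : ℕ) := by exact_mod_cast hlt
        have := neg_abs_le (x k - z k)
        have := mul_le_mul_of_nonneg_left hlt' hl'.le
        linarith
      · have hlt' : ((b k : ℕ) : ℝ) + 2 ≤ (a k : ℕ) := by exact_mod_cast hlt
        have := le_abs_self (x k - z k)
        have := mul_le_mul_of_nonneg_left hlt' hl'.le
        linarith
    have haa := hms a h0s
    have h2 : w a ≤ 2 * H * dist (f x) (f z) := by
      rw [← hHdef]
      subst hFdef
      refine img_lower hd hN h (ha a haa).1 hη hf hxF hxQ hzF (by positivity) ?_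
      nlinarith
    rw [inv_mul_le_iff₀ (by positivity)]
    calc W ≤ 2 * G * w a := hwlow a haa
      _ ≤ 2 * G * (2 * H * dist (f x) (f z)) := by gcongr
      _ = _ := by ring

theorem exists_theta (B e : ℝ) (hB : 0 < B) (he : 0 < e) :
    ∃ θ : ℝ, 0 < θ ∧ θ ≤ 1 / 2 ∧ B * θ ^ e ≤ 1 := by
  refine ⟨min (1 / 2) ((1 / B) ^ (1 / e)), by positivity, min_le_left _ _, ?_⟩
  have h1 : (min (1 / 2) ((1 / B) ^ (1 / e))) ^ e ≤ 1 / B := by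
    calc (min (1 / 2) ((1 / B) ^ (1 / e))) ^ e ≤ ((1 / B) ^ (1 / e)) ^ e :=
          Real.rpow_le_rpow (by positivity) (min_le_right _ _) he.le
      _ = 1 / B := by
          rw [← Real.rpow_mul (by positivity), one_div_mul_cancel he.ne', Real.rpow_one]
  calc B * _ ≤ B * (1 / B) := by gcongr
    _ = 1 := by field_simp

/-- For every distortion function `η` and `0 < α < d` there exists `m₀` such
that for every `m ≥ m₀`, every `(N,m)`-fat Cantor set `F ⊆ [0,1]^d` and every
`η`-quasisymmetry `f : F → Y`, one has `dimH (f '' F) ≥ α`. -/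
theorem fatCantor_dimH_image_ge
    (d N : ℕ) (hd : 1 ≤ d) (hN : 2 ≤ N) (η : ℝ → ℝ) (hη : IsDistortion η)
    (α : ℝ) (hα0 : 0 < α) (hαd : α < d) :
    ∃ m₀ : ℕ, ∀ m, m₀ ≤ m → ∀ F : Set (EuclideanSpace ℝ (Fin d)), IsFatCantorSet d N m F →
      ∀ (Y : Type) [MetricSpace Y] (f : EuclideanSpace ℝ (Fin d) → Y),
        IsQSOn η f F → ENNReal.ofReal α ≤ dimH (f '' F) := by
  have hd0 : (0 : ℝ) < d := by exact_mod_cast hd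
  have hH : 0 < η (16 * d) := hη.pos (by positivity)
  obtain ⟨θ, hθ, hθ2, hθB⟩ := exists_theta ((2 * (2 * η (16 * d) ^ 2) ^ d) * 2 ^ d) (d - α)
    (by positivity) (by linarith)
  have hcont : ∃ δ > 0, ∀ t, 0 ≤ t → t < δ → η t ≤ θ := by
    have h1 := hη.1 0 (Set.mem_Ici.2 le_rfl)
    obtain ⟨δ, hδ, h2⟩ := Metric.continuousWithinAt_iff.1 h1 θ hθ
    refine ⟨δ, hδ, fun t ht0 ht => ?_⟩
    have h3 := h2 (Set.mem_Ici.2 ht0) (by simpa [abs_of_nonneg ht0] using ht)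
    rw [hη.2.2.1, Real.dist_eq, sub_zero] at h3
    exact (le_abs_self _).trans h3.le
  obtain ⟨δ, hδ, hδη⟩ := hcont
  obtain ⟨M, hM⟩ := exists_nat_gt (4 * d / δ)
  refine ⟨max 8 M, fun m hm F hF Y _ f hf => ?_⟩
  obtain ⟨𝓕, h, rfl⟩ := hF
  have hmK : m < N ^ m := Nat.lt_pow_self (by omega)
  have hK : 8 ≤ N ^ m := le_trans ((le_max_left _ _).trans hm) hmK.le
  have hK0 : (0 : ℝ) < ((N ^ m : ℕ) : ℝ) := by
    have : 0 < N ^ m := by omega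
    exact_mod_cast this
  have hMK : (M : ℝ) ≤ ((N ^ m : ℕ) : ℝ) := by
    exact_mod_cast le_trans ((le_max_right _ _).trans hm) hmK.le
  have hθη : η (4 * d / ((N ^ m : ℕ) : ℝ)) ≤ θ := by
    refine hδη _ (by positivity) ?_
    rw [div_lt_iff₀ hK0]
    rw [div_lt_iff₀ hδ] at hM
    nlinarith
  letI : MeasurableSpace Y := borel Y
  haveI : BorelSpace Y := ⟨rfl⟩
  have hc : 0 < (4 * η (4 * d * ((N ^ m : ℕ) : ℝ)) * η (16 * d))⁻¹ := by
    have := hη.pos (s := 4 * d * ((N ^ m : ℕ) : ℝ)) (by positivity)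
    positivity
  have hroot : cube (fun _ : Fin d => (0 : ℝ)) 1 ∈ 𝓕 0 := by rw [h.1]; rfl
  have key := tree_hausdorff_ne_zero (Y := Y) (T := ℕ × Set (EuclideanSpace ℝ (Fin d)))
    (fun t => f '' ((⋂ n, ⋃₀ 𝓕 n) ∩ t.2)) (fun t => imgSize (⋂ n, ⋃₀ 𝓕 n) f t.2)
    (fun t => t.2 ∈ 𝓕 t.1) (fun t t' => t'.1 = t.1 + 1 ∧ t'.2 ⊆ t.2) α _ hα0 hc
    (fun t ht => img_pos hd hN hK h ht hη hf)
    (by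
      rintro ⟨n, Q⟩ hQ
      obtain ⟨ι, s, q, h1, h2, h3⟩ := one_scale hd hN hK h hQ hη hf hαd hθ hθ2 hθη
        (by linarith)
      refine ⟨ι, s, fun i => (n + 1, q i), fun i hi => ?_, h2, h3⟩
      obtain ⟨e1, e2, e3⟩ := h1 i hi
      exact ⟨e1, ⟨rfl, e2⟩, Set.image_mono (Set.inter_subset_inter_right _ e2), e3⟩)
    (by
      intro q hq hR
      obtain ⟨x, hxF, hx⟩ := fat_nested hN h q hq (fun k => (hR k).1) (fun k => (hR k).2)
      exact ⟨f x, Set.mem_iInter.2 fun k => Set.mem_image_of_mem f ⟨hxF, hx k⟩⟩)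
    (0, cube (fun _ => 0) 1) hroot
  have hdim : ((Real.toNNReal α : ℝ≥0) : ℝ≥0∞) ≤
      dimH (f '' ((⋂ n, ⋃₀ 𝓕 n) ∩ cube (fun _ => 0) 1)) := by
    apply le_dimH_of_hausdorffMeasure_ne_zero
    rw [Real.coe_toNNReal α hα0.le]
    exact key
  exact le_trans hdim (dimH_mono (Set.image_mono Set.inter_subset_left))
end

section
/- For every distortion function η and every 0 < s < 1 there exists a compact set E ⊆ [0,1] with dim_H E < 1 such that for every metric space Y and every η-quasisymmetry f : E → Y one has dim_H f(E) ≥ s. -/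
open Set Metric MeasureTheory ProbabilityTheory Filter
open scoped ENNReal NNReal Classical

namespace QSProof

open PiNat Function

/-- The coding map onto the Cantor set with even digits in base `2k+1`. -/
noncomputable def code (k : ℕ) (a : ℕ → Fin (k + 1)) : ℝ :=
  Real.ofDigits (fun i => (⟨2 * (a i : ℕ), by have := (a i).2; omega⟩ : Fin (2 * k + 1)))

/-- Inverse scale. -/
noncomputable def sc (k n : ℕ) : ℝ := ((2 * k + 1 : ℝ) ^ n)⁻¹

lemma sc_pos (k n : ℕ) : 0 < sc k n := by unfold sc; positivity

lemma sc_succ (k n : ℕ) : sc k n = (2 * k + 1) * sc k (n + 1) := by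
  unfold sc
  have : (2 * k + 1 : ℝ) ≠ 0 := by positivity
  rw [pow_succ]; field_simp

lemma code_upper {k n : ℕ} {a b : ℕ → Fin (k + 1)} (h : ∀ i < n, a i = b i) :
    |code k a - code k b| ≤ sc k n := by
  have := Real.abs_ofDigits_sub_ofDigits_le (b := 2 * k + 1) (n := n)
    (x := fun i => (⟨2 * (a i : ℕ), by have := (a i).2; omega⟩ : Fin (2 * k + 1)))
    (y := fun i => (⟨2 * (b i : ℕ), by have := (b i).2; omega⟩ : Fin (2 * k + 1)))
    (fun i hi => by simp [h i hi])
  unfold code sc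
  convert this using 3
  push_cast; rfl

lemma code_split {k n : ℕ} {a b : ℕ → Fin (k + 1)} (h : ∀ i < n, a i = b i) :
    code k a - code k b = 2 * ((a n : ℝ) - (b n : ℝ)) * sc k (n + 1) +
      sc k (n + 1) * (code k (fun i => a (i + (n + 1))) - code k (fun i => b (i + (n + 1)))) := by
  unfold code
  rw [Real.ofDigits_eq_sum_add_ofDigits _ (n + 1)]
  rw [Real.ofDigits_eq_sum_add_ofDigits (fun i => (⟨2 * (b i : ℕ), _⟩ : Fin (2 * k + 1))) (n + 1)]
  rw [Finset.sum_range_succ, Finset.sum_range_succ]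
  have e : ∑ i ∈ Finset.range n, Real.ofDigitsTerm
        (fun i => (⟨2 * (a i : ℕ), by have := (a i).2; omega⟩ : Fin (2 * k + 1))) i =
      ∑ i ∈ Finset.range n, Real.ofDigitsTerm
        (fun i => (⟨2 * (b i : ℕ), by have := (b i).2; omega⟩ : Fin (2 * k + 1))) i := by
    apply Finset.sum_congr rfl
    intro i hi
    simp [Real.ofDigitsTerm, h i (Finset.mem_range.1 hi)]
  rw [e]
  simp only [Real.ofDigitsTerm, sc]
  push_cast
  ring

lemma code_mem (k : ℕ) (a : ℕ → Fin (k + 1)) : code k a ∈ Set.Icc (0 : ℝ) 1 :=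
  ⟨Real.ofDigits_nonneg _, Real.ofDigits_le_one _⟩

lemma code_lower {k n : ℕ} {a b : ℕ → Fin (k + 1)} (h : ∀ i < n, a i = b i) (hn : a n ≠ b n) :
    sc k (n + 1) ≤ |code k a - code k b| := by
  rw [code_split h]
  have h1 := code_mem k (fun i => a (i + (n + 1)))
  have h2 := code_mem k (fun i => b (i + (n + 1)))
  set u := code k (fun i => a (i + (n + 1)))
  set v := code k (fun i => b (i + (n + 1)))
  have hs := sc_pos k (n + 1)
  have e : 2 * ((a n : ℝ) - (b n : ℝ)) * sc k (n + 1) + sc k (n + 1) * (u - v) =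
    sc k (n + 1) * (2 * ((a n : ℝ) - (b n : ℝ)) + (u - v)) := by ring
  rw [e, abs_mul, abs_of_pos hs]
  apply le_mul_of_one_le_right hs.le
  rcases lt_or_gt_of_ne hn with h3 | h3
  · have : ((a n : ℕ) : ℝ) + 1 ≤ ((b n : ℕ) : ℝ) := by exact_mod_cast h3
    rw [le_abs]; right; linarith [h1.1, h1.2, h2.1, h2.2]
  · have : ((b n : ℕ) : ℝ) + 1 ≤ ((a n : ℕ) : ℝ) := by exact_mod_cast h3
    rw [le_abs]; left; linarith [h1.1, h1.2, h2.1, h2.2]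

lemma code_update {k n : ℕ} (a : ℕ → Fin (k + 1)) (i j : Fin (k + 1)) :
    |code k (update a n i) - code k (update a n j)| =
      2 * |(i : ℝ) - (j : ℝ)| * sc k (n + 1) := by
  rw [code_split (n := n) (fun m hm => by simp [hm.ne])]
  have : ∀ i : Fin (k + 1), (fun m => update a n i (m + (n + 1))) = fun m => a (m + (n + 1)) := by
    intro i; funext m
    rw [update_of_ne]; omega
  rw [this i, this j]
  simp only [update_self, sub_self, mul_zero, add_zero]
  rw [abs_mul, abs_mul, abs_of_pos (sc_pos k (n + 1)), abs_of_pos (by norm_num : (0 : ℝ) < 2)]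

lemma code_update' {k n : ℕ} (a : ℕ → Fin (k + 1)) (j : Fin (k + 1)) :
    |code k a - code k (update a n j)| =
      2 * |(a n : ℝ) - (j : ℝ)| * sc k (n + 1) := by
  have := code_update (n := n) a (a n) j
  rwa [update_eq_self] at this

lemma code_inj {k : ℕ} : Injective (code k) := by
  intro a b hab
  by_contra hne
  have h := code_lower (a := a) (b := b) (n := firstDiff a b) (fun i hi => apply_eq_of_lt_firstDiff hi)
    (apply_firstDiff_ne hne)
  rw [hab, sub_self, abs_zero] at h
  exact absurd h (not_le.2 (sc_pos _ _))

lemma code_cont (k : ℕ) : Continuous (code k) := by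
  unfold code
  apply Real.continuous_ofDigits.comp
  apply continuous_pi
  intro i
  exact (continuous_of_discreteTopology
    (f := fun c : Fin (k + 1) => (⟨2 * (c : ℕ), by have := c.2; omega⟩ : Fin (2 * k + 1)))).comp
    (continuous_apply i)

lemma exists_far {k : ℕ} (c : Fin (k + 1)) : ∃ j : Fin (k + 1), (k : ℝ) ≤ 2 * |(c : ℝ) - (j : ℝ)| := by
  by_cases h : k ≤ 2 * (c : ℕ)
  · refine ⟨0, ?_⟩
    have : (k : ℝ) ≤ 2 * (c : ℕ) := by exact_mod_cast h
    simpa using this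
  · refine ⟨Fin.last k, ?_⟩
    have : (2 : ℝ) * (c : ℕ) ≤ k := by exact_mod_cast (not_le.1 h).le
    rw [abs_sub_comm, Fin.val_last]
    have := le_abs_self ((k : ℝ) - (c : ℕ))
    linarith

/-- dimension of the Cantor set. -/
lemma dimH_range_code {k : ℕ} (hk : 1 ≤ k) : dimH (Set.range (code k)) < 1 := by
  have hk' : (1 : ℝ) ≤ k := by exact_mod_cast hk
  set t : ℝ := Real.logb (2 * k + 1) (k + 1) with ht
  have hM1 : (1 : ℝ) < 2 * k + 1 := by linarith
  have ht0 : 0 ≤ t := Real.logb_nonneg hM1 (by linarith)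
  have ht1 : t < 1 := by
    rw [ht, Real.logb_lt_iff_lt_rpow hM1 (by linarith), Real.rpow_one]; linarith
  have hMt : (2 * k + 1 : ℝ) ^ t = k + 1 :=
    Real.rpow_logb (by linarith) (by linarith) (by linarith)
  have hsct : ∀ n, sc k n ^ t = ((k + 1 : ℝ) ^ n)⁻¹ := by
    intro n
    unfold sc
    rw [Real.inv_rpow (by positivity), ← hMt, ← Real.rpow_natCast, ← Real.rpow_natCast,
      ← Real.rpow_mul (by positivity), ← Real.rpow_mul (by positivity),
      mul_comm (n : ℝ) t]
  have key : μH[t] (Set.range (code k)) ≤ 1 := by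
    have hd : ∀ (n : ℕ) (w : Fin n → Fin (k + 1)),
        ediam (code k '' {a | ∀ i : Fin n, a i = w i}) ≤ ENNReal.ofReal (sc k n) := by
      intro n w
      apply Metric.ediam_le
      rintro _ ⟨a, ha, rfl⟩ _ ⟨b, hb, rfl⟩
      rw [edist_dist, Real.dist_eq]
      apply ENNReal.ofReal_le_ofReal
      apply code_upper
      intro i hi
      rw [ha ⟨i, hi⟩, hb ⟨i, hi⟩]
    refine (Measure.hausdorffMeasure_le_liminf_sum (ι := fun n : ℕ => Fin n → Fin (k + 1)) t
      (Set.range (code k)) (l := atTop)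
      (fun n => ENNReal.ofReal (sc k n)) ?_
      (fun n w => code k '' {a | ∀ i : Fin n, a i = w i}) ?_ ?_).trans ?_
    · rw [← ENNReal.ofReal_zero]
      apply ENNReal.tendsto_ofReal
      unfold sc
      exact tendsto_inv_atTop_zero.comp (tendsto_pow_atTop_atTop_of_one_lt hM1)
    · exact Eventually.of_forall hd
    · refine Eventually.of_forall fun n => ?_
      rintro _ ⟨a, rfl⟩
      exact Set.mem_iUnion.2 ⟨fun i => a i, a, fun i => rfl, rfl⟩
    · apply liminf_le_of_frequently_le'
      apply Frequently.of_forall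
      intro n
      calc ∑ w : Fin n → Fin (k + 1), ediam (code k '' {a | ∀ i : Fin n, a i = w i}) ^ t
          ≤ ∑ w : Fin n → Fin (k + 1), ENNReal.ofReal (((k + 1 : ℝ) ^ n)⁻¹) := by
            apply Finset.sum_le_sum
            intro w _
            rw [← hsct, ← ENNReal.ofReal_rpow_of_pos (sc_pos k n)]
            exact ENNReal.rpow_le_rpow (hd n w) ht0
        _ = 1 := by
            rw [Finset.sum_const, Finset.card_univ, nsmul_eq_mul, ← ENNReal.ofReal_natCast,
              ← ENNReal.ofReal_mul (by positivity)]
            simp only [Fintype.card_fun, Fintype.card_fin]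
            push_cast
            rw [mul_inv_cancel₀ (by positivity), ENNReal.ofReal_one]
  have : dimH (Set.range (code k)) ≤ ((t.toNNReal : ℝ≥0) : ℝ≥0∞) := by
    apply dimH_le_of_hausdorffMeasure_ne_top
    rw [Real.coe_toNNReal t ht0]
    exact ne_top_of_le_ne_top ENNReal.one_ne_top key
  refine this.trans_lt ?_
  exact_mod_cast (Real.toNNReal_lt_one.2 ht1)

/-- Quasisymmetry in a convenient form on the coding space. -/
def QF (k : ℕ) (η : ℝ → ℝ) {Y : Type} [MetricSpace Y] (F : (ℕ → Fin (k + 1)) → Y) : Prop :=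
  Injective F ∧ ∀ a b c t, a ≠ c → |code k a - code k b| ≤ t * |code k a - code k c| →
    dist (F a) (F b) ≤ η t * dist (F a) (F c)

/-- Diameter of the image of a cylinder. -/
noncomputable def D {k : ℕ} {Y : Type} [MetricSpace Y] (F : (ℕ → Fin (k + 1)) → Y)
    (a : ℕ → Fin (k + 1)) (n : ℕ) : ℝ := Metric.diam (F '' PiNat.cylinder a n)

section
variable {k : ℕ} {η : ℝ → ℝ} {Y : Type} [MetricSpace Y] {F : (ℕ → Fin (k + 1)) → Y}

lemma D_nonneg (a : ℕ → Fin (k + 1)) (n : ℕ) : 0 ≤ D F a n := Metric.diam_nonneg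

lemma D_congr {a b : ℕ → Fin (k + 1)} {n : ℕ} (h : b ∈ PiNat.cylinder a n) : D F b n = D F a n := by
  unfold D; rw [mem_cylinder_iff_eq.1 h]

lemma update_ne (hk : 1 ≤ k) {n : ℕ} {a : ℕ → Fin (k + 1)} {j : Fin (k + 1)}
    (hj : (k : ℝ) ≤ 2 * |(a n : ℝ) - (j : ℝ)|) : a ≠ update a n j := by
  intro h
  have h1 := congrFun h n
  rw [update_self] at h1
  rw [h1, sub_self, abs_zero, mul_zero] at hj
  have : (1 : ℝ) ≤ k := by exact_mod_cast hk
  linarith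

lemma bdd (hk : 1 ≤ k) (hF : QF k η F) : Bornology.IsBounded (Set.range F) := by
  let u : ℕ → Fin (k + 1) := fun _ => 0
  obtain ⟨j, hj⟩ := exists_far (u 0)
  have hne := update_ne hk hj
  set z := update u 0 j
  have hpos : 0 < |code k u - code k z| := abs_pos.2 (sub_ne_zero.2 (code_inj.ne hne))
  rw [Metric.isBounded_iff_subset_closedBall (F u)]
  refine ⟨η (1 / |code k u - code k z|) * dist (F u) (F z), ?_⟩
  rintro _ ⟨v, rfl⟩
  rw [Metric.mem_closedBall, dist_comm]
  apply hF.2 _ _ _ _ hne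
  rw [one_div, inv_mul_cancel₀ hpos.ne']
  have h1 := code_mem k u
  have h2 := code_mem k v
  rw [abs_le]; constructor <;> linarith [h1.1, h1.2, h2.1, h2.2]

lemma dist_le_D (hb : Bornology.IsBounded (Set.range F)) {a u v : ℕ → Fin (k + 1)} {n : ℕ}
    (hu : u ∈ PiNat.cylinder a n) (hv : v ∈ PiNat.cylinder a n) : dist (F u) (F v) ≤ D F a n :=
  Metric.dist_le_diam_of_mem (hb.subset (Set.image_subset_range _ _))
    (Set.mem_image_of_mem _ hu) (Set.mem_image_of_mem _ hv)

lemma D_le {a : ℕ → Fin (k + 1)} {n : ℕ} {C : ℝ} (hC : 0 ≤ C)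
    (h : ∀ u ∈ PiNat.cylinder a n, ∀ v ∈ PiNat.cylinder a n, dist (F u) (F v) ≤ C) : D F a n ≤ C := by
  apply Metric.diam_le_of_forall_dist_le hC
  rintro _ ⟨u, hu, rfl⟩ _ ⟨v, hv, rfl⟩
  exact h u hu v hv

lemma D_pos (hk : 1 ≤ k) (hF : QF k η F) (a : ℕ → Fin (k + 1)) (n : ℕ) : 0 < D F a n := by
  obtain ⟨j, hj⟩ := exists_far (a n)
  have hne := update_ne hk hj
  exact (dist_pos.2 (hF.1.ne hne)).trans_le
    (dist_le_D (bdd hk hF) (self_mem_cylinder a n) (update_mem_cylinder a n j))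

lemma D_small (hk : 1 ≤ k) (hη0 : ∀ t, 0 ≤ t → 0 ≤ η t) (hF : QF k η F)
    (a : ℕ → Fin (k + 1)) (n : ℕ) : D F a (n + 1) ≤ η (1 / k) * D F a n := by
  have hk' : (1 : ℝ) ≤ k := by exact_mod_cast hk
  have he : 0 ≤ η (1 / k) := hη0 _ (by positivity)
  apply D_le (mul_nonneg he (D_nonneg _ _))
  intro u hu v hv
  obtain ⟨j, hj⟩ := exists_far (u n)
  have hne := update_ne hk hj
  have hu' : u ∈ PiNat.cylinder a n := cylinder_anti a (Nat.le_succ n) hu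
  have h1 : dist (F u) (F v) ≤ η (1 / k) * dist (F u) (F (update u n j)) := by
    apply hF.2 _ _ _ _ hne
    rw [code_update']
    have h2 : |code k u - code k v| ≤ sc k (n + 1) :=
      code_upper fun i hi => (hu i hi).trans (hv i hi).symm
    refine h2.trans ?_
    rw [← mul_assoc]
    apply le_mul_of_one_le_left (sc_pos _ _).le
    rw [one_div, ← div_eq_inv_mul, le_div_iff₀ (by linarith), one_mul]
    exact hj
  refine h1.trans (mul_le_mul_of_nonneg_left ?_ he)
  apply dist_le_D (bdd hk hF) hu'
  rw [← mem_cylinder_iff_eq.1 hu']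
  exact update_mem_cylinder u n j

lemma D_chain (hk : 1 ≤ k) (hη0 : ∀ t, 0 ≤ t → 0 ≤ η t) (hF : QF k η F)
    (a : ℕ → Fin (k + 1)) (n : ℕ) :
    D F a n ≤ 2 * (1 + η 6) * ∑ j : Fin (k + 1), D F (update a n j) (n + 1) := by
  have hk' : (1 : ℝ) ≤ k := by exact_mod_cast hk
  have he : 0 ≤ η 6 := hη0 _ (by norm_num)
  have hb := bdd hk hF
  set S := ∑ j : Fin (k + 1), D F (update a n j) (n + 1) with hS
  have hS0 : 0 ≤ S := Finset.sum_nonneg fun j _ => D_nonneg _ _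
  let p : ℕ → ℕ → Fin (k + 1) := fun i => update a n (Fin.ofNat (k + 1) i)
  have hpF : ∀ j : Fin (k + 1), p j = update a n j := by
    intro j; simp [p]
  have hstep : ∀ i < k, dist (F (p i)) (F (p (i + 1))) ≤ η 6 * D F (p i) (n + 1) := by
    intro i hi
    obtain ⟨j, hj⟩ := exists_far (p i (n + 1))
    have hne := update_ne hk hj
    have h1 : dist (F (p i)) (F (p (i + 1))) ≤ η 6 * dist (F (p i)) (F (update (p i) (n + 1) j)) := by
      apply hF.2 _ _ _ _ hne
      rw [code_update']
      have h2 : |code k (p i) - code k (p (i + 1))| = 2 * sc k (n + 1) := by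
        simp only [p]
        rw [code_update]
        have e1 : ((Fin.ofNat (k + 1) i : Fin (k + 1)) : ℕ) = i := by
          simp only [Fin.ofNat]; exact Nat.mod_eq_of_lt (by omega)
        have e2 : ((Fin.ofNat (k + 1) (i + 1) : Fin (k + 1)) : ℕ) = i + 1 := by
          simp only [Fin.ofNat]; exact Nat.mod_eq_of_lt (by omega)
        rw [e1, e2]; push_cast
        rw [show (i : ℝ) - (i + 1) = -1 by ring]; simp
      rw [h2, sc_succ k (n + 1)]
      have hs := sc_pos k (n + 1 + 1)
      calc 2 * ((2 * k + 1) * sc k (n + 1 + 1)) = (2 * (2 * k + 1)) * sc k (n + 1 + 1) := by ring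
        _ ≤ (6 * k) * sc k (n + 1 + 1) := by
            apply mul_le_mul_of_nonneg_right _ hs.le; linarith
        _ ≤ (6 * (2 * |(p i (n + 1) : ℝ) - (j : ℝ)|)) * sc k (n + 1 + 1) := by
            apply mul_le_mul_of_nonneg_right _ hs.le; linarith
        _ = _ := by ring
    refine h1.trans (mul_le_mul_of_nonneg_left ?_ he)
    exact dist_le_D hb (self_mem_cylinder _ _) (update_mem_cylinder _ _ _)
  have hsum : ∑ i ∈ Finset.range (k + 1), D F (p i) (n + 1) = S := by
    rw [Finset.sum_range, hS]
    apply Finset.sum_congr rfl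
    intro j _
    rw [hpF]
  have hone : ∀ u ∈ PiNat.cylinder a n, dist (F (p 0)) (F u) ≤ (1 + η 6) * S := by
    intro u hu
    have h1 : dist (F (p 0)) (F (p (u n))) ≤ η 6 * S := by
      refine (dist_le_range_sum_dist (fun i => F (p i)) (u n)).trans ?_
      rw [← hsum, Finset.mul_sum]
      calc ∑ i ∈ Finset.range (u n), dist (F (p i)) (F (p (i + 1)))
          ≤ ∑ i ∈ Finset.range (u n), η 6 * D F (p i) (n + 1) := by
            apply Finset.sum_le_sum
            intro i hi
            apply hstep
            have := (u n).2
            have := Finset.mem_range.1 hi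
            omega
        _ ≤ _ := by
            apply Finset.sum_le_sum_of_subset_of_nonneg
            · intro i hi
              have := (u n).2
              have := Finset.mem_range.1 hi
              exact Finset.mem_range.2 (by omega)
            · intro i _ _
              exact mul_nonneg he (D_nonneg _ _)
    have h2 : dist (F (p (u n))) (F u) ≤ S := by
      have h3 : dist (F (p (u n))) (F u) ≤ D F (update a n (u n)) (n + 1) := by
        rw [hpF]
        apply dist_le_D hb (self_mem_cylinder _ _)
        intro i hi
        rcases Nat.lt_succ_iff_lt_or_eq.1 hi with h | h
        · rw [update_of_ne h.ne]; exact hu i h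
        · subst h; rw [update_self]
      exact h3.trans (Finset.single_le_sum (f := fun j => D F (update a n j) (n + 1))
        (fun j _ => D_nonneg _ _) (Finset.mem_univ (u n)))
    calc dist (F (p 0)) (F u) ≤ _ := dist_triangle _ (F (p (u n))) _
      _ ≤ (1 + η 6) * S := by linarith
  apply D_le (by positivity)
  intro u hu v hv
  have := dist_triangle_left (F u) (F v) (F (p 0))
  linarith [hone u hu, hone v hv]

lemma D_rpow (hk : 1 ≤ k) (hη0 : ∀ t, 0 ≤ t → 0 ≤ η t) (hF : QF k η F) {s : ℝ}
    (hs1 : s < 1)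
    (hK : 2 * (1 + η 6) * η (1 / k) ^ (1 - s) ≤ 1)
    (a : ℕ → Fin (k + 1)) (n : ℕ) :
    D F a n ^ s ≤ ∑ j : Fin (k + 1), D F (update a n j) (n + 1) ^ s := by
  have he : 0 ≤ η 6 := hη0 _ (by norm_num)
  have he' : 0 ≤ η (1 / k) := hη0 _ (by positivity)
  have hD := D_pos hk hF a n
  have hj : ∀ j : Fin (k + 1), D F (update a n j) (n + 1) ≤
      D F (update a n j) (n + 1) ^ s * (η (1 / k) ^ (1 - s) * D F a n ^ (1 - s)) := by
    intro j
    have hp := D_pos hk hF (update a n j) (n + 1)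
    have h1 := D_small hk hη0 hF (update a n j) n
    rw [D_congr (update_mem_cylinder a n j)] at h1
    calc D F (update a n j) (n + 1) = D F (update a n j) (n + 1) ^ s *
          D F (update a n j) (n + 1) ^ (1 - s) := by
          rw [← Real.rpow_add hp]; simp
      _ ≤ _ := by
          rw [← Real.mul_rpow he' hD.le]
          apply mul_le_mul_of_nonneg_left _ (Real.rpow_nonneg hp.le _)
          exact Real.rpow_le_rpow hp.le h1 (by linarith)
  set T := ∑ j : Fin (k + 1), D F (update a n j) (n + 1) ^ s
  have hT : 0 ≤ T := Finset.sum_nonneg fun j _ => Real.rpow_nonneg (D_nonneg _ _) _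
  have hDs : 0 < D F a n ^ (1 - s) := Real.rpow_pos_of_pos hD _
  have h2 : D F a n ^ s * D F a n ^ (1 - s) ≤ T * D F a n ^ (1 - s) := by
    calc D F a n ^ s * D F a n ^ (1 - s) = D F a n := by
          rw [← Real.rpow_add hD]; simp
      _ ≤ 2 * (1 + η 6) * ∑ j : Fin (k + 1), D F (update a n j) (n + 1) := D_chain hk hη0 hF a n
      _ ≤ 2 * (1 + η 6) * (T * (η (1 / k) ^ (1 - s) * D F a n ^ (1 - s))) := by
          apply mul_le_mul_of_nonneg_left _ (by positivity)
          rw [Finset.sum_mul]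
          exact Finset.sum_le_sum fun j _ => hj j
      _ = (2 * (1 + η 6) * η (1 / k) ^ (1 - s)) * (T * D F a n ^ (1 - s)) := by ring
      _ ≤ 1 * (T * D F a n ^ (1 - s)) := by
          exact mul_le_mul_of_nonneg_right hK (mul_nonneg hT hDs.le)
      _ = _ := one_mul _
  exact le_of_mul_le_mul_right h2 hDs

end

/-- Branch construction. -/
lemma exists_branch {k : ℕ} (P : (ℕ → Fin (k + 1)) → ℕ → Prop)
    (hc : ∀ a b n, b ∈ PiNat.cylinder a n → P a n → P b n) (x : ℕ → Fin (k + 1)) (h0 : P x 0)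
    (hs : ∀ a n, P a n → ∃ j, P (update a n j) (n + 1)) : ∃ a, ∀ n, P a n := by
  choose g hg using hs
  let X : (n : ℕ) → {a // P a n} := fun n =>
    Nat.rec ⟨x, h0⟩ (fun n a => ⟨update a.1 n (g a.1 n a.2), hg a.1 n a.2⟩) n
  have hX : ∀ n, (X (n + 1)).1 = update (X n).1 n (g (X n).1 n (X n).2) := fun n => rfl
  have hst : ∀ i m, (X (i + 1 + m)).1 i = (X (i + 1)).1 i := by
    intro i m
    induction m with
    | zero => rfl
    | succ m ih =>
      rw [← add_assoc, hX, update_of_ne (by omega), ih]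
  refine ⟨fun i => (X (i + 1)).1 i, fun n => hc (X n).1 _ n ?_ (X n).2⟩
  intro i hi
  obtain ⟨m, rfl⟩ := Nat.exists_eq_add_of_lt hi
  have := hst i m
  rw [show i + m + 1 = i + 1 + m by ring]
  exact this.symm

/-- Covering lemma. -/
lemma cover {k : ℕ} (h : (ℕ → Fin (k + 1)) → ℕ → ℝ≥0∞)
    (hcong : ∀ a b n, b ∈ PiNat.cylinder a n → h b n = h a n)
    (hsub : ∀ a n, h a n ≤ ∑ j : Fin (k + 1), h (update a n j) (n + 1))
    (c : ℕ → ℕ → Fin (k + 1)) (m : ℕ → ℕ) (hcov : ∀ a, ∃ i, a ∈ PiNat.cylinder (c i) (m i))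
    (x : ℕ → Fin (k + 1)) : h x 0 ≤ ∑' i, h (c i) (m i) := by
  by_contra! hlt
  let S : (ℕ → Fin (k + 1)) → ℕ → ℝ≥0∞ := fun a n =>
    ∑' i, if n ≤ m i ∧ c i ∈ PiNat.cylinder a n then h (c i) (m i) else 0
  obtain ⟨a, ha⟩ := exists_branch (fun a n => S a n < h a n) (by
      intro a b n hb hP
      have : S b n = S a n := by
        simp only [S, mem_cylinder_iff_eq.1 hb]
      rw [this, hcong a b n hb]
      exact hP) x (by
      refine lt_of_le_of_lt ?_ hlt
      apply ENNReal.tsum_le_tsum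
      intro i
      split_ifs
      · exact le_rfl
      · exact zero_le) (by
      intro a n hP
      by_contra! hcon
      have h1 : h a n ≤ ∑ j : Fin (k + 1), S (update a n j) (n + 1) :=
        (hsub a n).trans (Finset.sum_le_sum fun j _ => hcon j)
      have h2 : ∑ j : Fin (k + 1), S (update a n j) (n + 1) ≤ S a n := by
        simp only [S]
        rw [← Summable.tsum_finsetSum (fun _ _ => ENNReal.summable)]
        apply ENNReal.tsum_le_tsum
        intro i
        have h3 : ∀ j : Fin (k + 1), j ≠ c i n →
            ¬ (n + 1 ≤ m i ∧ c i ∈ PiNat.cylinder (update a n j) (n + 1)) := by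
          rintro j hj ⟨_, h5⟩
          have := h5 n (Nat.lt_succ_self n)
          rw [update_self] at this
          exact hj this.symm
        rw [Finset.sum_eq_single (c i n) (fun j _ hj => if_neg (h3 j hj))
          (fun hh => absurd (Finset.mem_univ _) hh)]
        by_cases h4 : n + 1 ≤ m i ∧ c i ∈ PiNat.cylinder (update a n (c i n)) (n + 1)
        · rw [if_pos h4, if_pos]
          refine ⟨by omega, ?_⟩
          have := cylinder_anti (update a n (c i n)) (Nat.le_succ n) h4.2
          rwa [mem_cylinder_iff_eq.1 (update_mem_cylinder a n (c i n))] at this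
        · rw [if_neg h4]; exact zero_le
      exact absurd (h1.trans h2) (not_le.2 hP))
  obtain ⟨i, hi⟩ := hcov a
  have h1 := ha (m i)
  have h2 : h (c i) (m i) ≤ S a (m i) := by
    refine le_trans ?_ (ENNReal.le_tsum i)
    rw [if_pos ⟨le_rfl, (mem_cylinder_comm _ _ _).1 hi⟩]
  rw [hcong _ _ _ hi] at h1
  exact absurd h2 (not_le.2 h1)

section
variable {k : ℕ} {η : ℝ → ℝ} {Y : Type} [MetricSpace Y] {F : (ℕ → Fin (k + 1)) → Y}

lemma D_pow_small (hk : 1 ≤ k) (hη0 : ∀ t, 0 ≤ t → 0 ≤ η t) (hF : QF k η F)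
    (a : ℕ → Fin (k + 1)) (n : ℕ) : D F a n ≤ η (1 / k) ^ n * D F a 0 := by
  induction n with
  | zero => simp
  | succ n ih =>
    refine (D_small hk hη0 hF a n).trans ?_
    rw [pow_succ', mul_assoc]
    exact mul_le_mul_of_nonneg_left ih (hη0 _ (by positivity))

lemma one_cell (hk : 1 ≤ k) (hη0 : ∀ t, 0 ≤ t → 0 ≤ η t) (hF : QF k η F) {s : ℝ}
    (hs0 : 0 < s) (hlt : η (1 / k) < 1) (U : Set Y) (ε : ℝ≥0∞) (hε : 0 < ε) :
    ∃ c : ℕ → Fin (k + 1), ∃ m : ℕ, F ⁻¹' U ⊆ PiNat.cylinder c m ∧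
      ENNReal.ofReal (D F c m ^ s) ≤
        ENNReal.ofReal ((2 * η (2 * k + 1)) ^ s) * (⨆ _ : U.Nonempty, ediam U ^ s) + ε := by
  have hM : 0 ≤ η (2 * k + 1) := hη0 _ (by positivity)
  by_cases hsub : (F ⁻¹' U).Subsingleton
  · obtain ⟨c, hc⟩ : ∃ c, F ⁻¹' U ⊆ {c} := by
      rcases hsub.eq_empty_or_singleton with h | ⟨c, h⟩
      · exact ⟨fun _ => 0, by rw [h]; exact Set.empty_subset _⟩
      · exact ⟨c, h.subset⟩
    have htend : Tendsto (fun n => ENNReal.ofReal (D F c n ^ s)) atTop (nhds 0) := by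
      have h1 : Tendsto (fun n => D F c n) atTop (nhds 0) := by
        refine squeeze_zero (fun n => D_nonneg c n) (fun n => D_pow_small hk hη0 hF c n) ?_
        have := (tendsto_pow_atTop_nhds_zero_of_lt_one (hη0 _ (by positivity)) hlt).mul_const
          (D F c 0)
        simpa using this
      have h2 := (h1.rpow_const (Or.inr hs0.le) : Tendsto (fun n => D F c n ^ s) atTop _)
      rw [Real.zero_rpow hs0.ne'] at h2
      simpa using ENNReal.tendsto_ofReal h2
    obtain ⟨m, hm⟩ := (htend.eventually_lt_const hε).exists
    refine ⟨c, m, fun x hx => ?_, hm.le.trans le_add_self⟩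
    rw [hc hx]; exact self_mem_cylinder _ _
  · have hex : ∃ n, ∃ x ∈ F ⁻¹' U, ∃ y ∈ F ⁻¹' U, x ≠ y ∧ firstDiff x y = n := by
      rw [Set.not_subsingleton_iff] at hsub
      obtain ⟨x, hx, y, hy, hxy⟩ := hsub
      exact ⟨_, x, hx, y, hy, hxy, rfl⟩
    obtain ⟨x, hx, y, hy, hxy, hn⟩ := Nat.find_spec hex
    set n := Nat.find hex with hndef
    have hcyl : F ⁻¹' U ⊆ PiNat.cylinder x n := by
      intro z hz
      by_cases hzx : z = x
      · rw [hzx]; exact self_mem_cylinder _ _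
      · rw [mem_cylinder_iff_le_firstDiff hzx]
        exact Nat.find_min' hex ⟨z, hz, x, hx, hzx, rfl⟩
    refine ⟨x, n, hcyl, le_trans ?_ le_self_add⟩
    have hd : D F x n ≤ 2 * η (2 * k + 1) * dist (F x) (F y) := by
      have h1 : ∀ z ∈ PiNat.cylinder x n, dist (F x) (F z) ≤ η (2 * k + 1) * dist (F x) (F y) := by
        intro z hz
        apply hF.2 _ _ _ _ hxy
        have h2 : |code k x - code k z| ≤ sc k n := code_upper fun i hi => (hz i hi).symm
        have h3 : sc k (n + 1) ≤ |code k x - code k y| := by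
          apply code_lower
          · intro i hi; exact apply_eq_of_lt_firstDiff (hn ▸ hi)
          · rw [← hn]; exact apply_firstDiff_ne hxy
        rw [sc_succ] at h2
        exact h2.trans (mul_le_mul_of_nonneg_left h3 (by positivity))
      apply D_le (by positivity)
      intro u hu v hv
      have := dist_triangle_left (F u) (F v) (F x)
      linarith [h1 u hu, h1 v hv]
    have hU : U.Nonempty := ⟨F x, hx⟩
    rw [ciSup_pos hU]
    calc ENNReal.ofReal (D F x n ^ s)
        ≤ ENNReal.ofReal ((2 * η (2 * k + 1)) ^ s * dist (F x) (F y) ^ s) := by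
          apply ENNReal.ofReal_le_ofReal
          rw [← Real.mul_rpow (by positivity) dist_nonneg]
          exact Real.rpow_le_rpow (D_nonneg _ _) hd hs0.le
      _ = ENNReal.ofReal ((2 * η (2 * k + 1)) ^ s) * edist (F x) (F y) ^ s := by
          rw [ENNReal.ofReal_mul (by positivity), edist_dist,
            ENNReal.ofReal_rpow_of_nonneg dist_nonneg hs0.le]
      _ ≤ _ := by
          gcongr
          exact Metric.edist_le_ediam_of_mem hx hy

lemma main_lower (hk : 1 ≤ k) (hη0 : ∀ t, 0 ≤ t → 0 ≤ η t) (hF : QF k η F) {s : ℝ}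
    (hs0 : 0 < s) (hs1 : s < 1) (hlt : η (1 / k) < 1)
    (hK : 2 * (1 + η 6) * η (1 / k) ^ (1 - s) ≤ 1) :
    ENNReal.ofReal s ≤ dimH (Set.range F) := by
  borelize Y
  let x : ℕ → Fin (k + 1) := fun _ => 0
  set H := ENNReal.ofReal (D F x 0 ^ s) with hH
  have hHpos : 0 < H := ENNReal.ofReal_pos.2 (Real.rpow_pos_of_pos (D_pos hk hF x 0) _)
  set C := ENNReal.ofReal ((2 * η (2 * k + 1)) ^ s) with hC
  have hcover : ∀ t : ℕ → Set Y, Set.range F ⊆ ⋃ n, t n →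
      H ≤ C * ∑' n, ⨆ _ : (t n).Nonempty, ediam (t n) ^ s := by
    intro t ht
    apply ENNReal.le_of_forall_pos_le_add
    intro ε hε _
    obtain ⟨ε', hε', hsum⟩ := ENNReal.exists_pos_sum_of_countable
      (ENNReal.coe_pos.2 hε).ne' ℕ
    choose c m hcm hle using fun n => one_cell hk hη0 hF hs0 hlt (t n) (ε' n)
      (ENNReal.coe_pos.2 (hε' n))
    have h1 := cover (fun a n => ENNReal.ofReal (D F a n ^ s))
      (fun a b n hb => by simp only [D_congr hb])
      (fun a n => by
        rw [← ENNReal.ofReal_sum_of_nonneg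
          (fun j _ => Real.rpow_nonneg (D_nonneg _ _) _)]
        exact ENNReal.ofReal_le_ofReal (D_rpow hk hη0 hF hs1 hK a n)) c m
      (fun a => by
        obtain ⟨i, hi⟩ := Set.mem_iUnion.1 (ht ⟨a, rfl⟩)
        exact ⟨i, hcm i hi⟩) x
    calc H ≤ _ := h1
      _ ≤ ∑' n, (C * (⨆ _ : (t n).Nonempty, ediam (t n) ^ s) + ε' n) :=
          ENNReal.tsum_le_tsum hle
      _ = C * (∑' n, ⨆ _ : (t n).Nonempty, ediam (t n) ^ s) + ∑' n, (ε' n : ℝ≥0∞) := by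
          rw [ENNReal.tsum_add, ENNReal.tsum_mul_left]
      _ ≤ _ := by gcongr
  have hle : H / C ≤ μH[s] (Set.range F) := by
    rw [Measure.hausdorffMeasure_apply]
    refine le_iSup₂_of_le 1 one_pos ?_
    refine le_iInf fun t => le_iInf fun ht => le_iInf fun _ => ?_
    exact ENNReal.div_le_of_le_mul' (hcover t ht)
  have hne : μH[((s.toNNReal : ℝ≥0) : ℝ)] (Set.range F) ≠ 0 := by
    rw [Real.coe_toNNReal s hs0.le]
    refine (lt_of_lt_of_le ?_ hle).ne'
    exact ENNReal.div_pos hHpos.ne' ENNReal.ofReal_ne_top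
  exact le_dimH_of_hausdorffMeasure_ne_zero hne

end

end QSProof

/-- For every distortion function `η` and every `0 < s < 1` there is a compact
set `E ⊆ [0,1]` with `dimH E < 1` such that every `η`-quasisymmetry `f : E → Y` satisfies
`dimH (f '' E) ≥ s`. -/
theorem exists_compact_dimH_lt_one_image_ge
    (η : ℝ → ℝ) (hη : IsDistortion η) (s : ℝ) (hs0 : 0 < s) (hs1 : s < 1) :
    ∃ E : Set ℝ, IsCompact E ∧ E ⊆ Set.Icc 0 1 ∧ dimH E < 1 ∧
      ∀ (Y : Type) [MetricSpace Y] (f : ℝ → Y), IsQSOn η f E →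
        ENNReal.ofReal s ≤ dimH (f '' E) := by
  obtain ⟨hcont, hmono, hz, hsurj⟩ := hη
  have hη0 : ∀ t, 0 ≤ t → 0 ≤ η t := by
    intro t ht
    rw [← hz]
    exact hmono.monotoneOn (Set.mem_Ici.2 le_rfl) ht ht
  have he : 0 ≤ η 6 := hη0 _ (by norm_num)
  set q : ℝ := 2 * (1 + η 6) with hq
  have hqp : 2 ≤ q := by linarith
  -- target value for `η (1/k)`
  set δ : ℝ := (q⁻¹) ^ (1 / (1 - s)) with hδ
  have hs' : 0 < 1 - s := by linarith
  have hδ0 : 0 < δ := Real.rpow_pos_of_pos (by positivity) _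
  have hδ1 : δ < 1 := Real.rpow_lt_one (by positivity)
    (inv_lt_one_of_one_lt₀ (by linarith)) (by positivity)
  obtain ⟨τ, hτ, hτδ⟩ := hsurj (Set.mem_Ici.2 hδ0.le)
  have hτ0 : 0 < τ := by
    rcases (Set.mem_Ici.1 hτ).eq_or_lt with h | h
    · rw [← h, hz] at hτδ; linarith
    · exact h
  obtain ⟨k₀, hk₀⟩ := exists_nat_one_div_lt hτ0
  set k := k₀ + 1 with hkdef
  have hk : 1 ≤ k := by omega
  have hkδ : η (1 / k) ≤ δ := by
    rw [← hτδ]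
    refine hmono.monotoneOn (Set.mem_Ici.2 (by positivity)) hτ ?_
    rw [hkdef]; push_cast; exact hk₀.le
  have hK : 2 * (1 + η 6) * η (1 / k) ^ (1 - s) ≤ 1 := by
    have h1 : η (1 / k) ^ (1 - s) ≤ q⁻¹ := by
      calc η (1 / k) ^ (1 - s) ≤ δ ^ (1 - s) :=
            Real.rpow_le_rpow (hη0 _ (by positivity)) hkδ hs'.le
        _ = q⁻¹ := by
            rw [hδ, ← Real.rpow_mul (by positivity), one_div, inv_mul_cancel₀ hs'.ne',
              Real.rpow_one]
    calc q * η (1 / k) ^ (1 - s) ≤ q * q⁻¹ := mul_le_mul_of_nonneg_left h1 (by linarith)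
      _ = 1 := mul_inv_cancel₀ (by linarith)
  refine ⟨Set.range (QSProof.code k), isCompact_range (QSProof.code_cont k), ?_,
    QSProof.dimH_range_code hk, ?_⟩
  · rintro _ ⟨a, rfl⟩; exact QSProof.code_mem k a
  · intro Y _ f hf
    rw [← Set.range_comp]
    refine QSProof.main_lower hk hη0 ⟨?_, ?_⟩ hs0 hs1 (hkδ.trans_lt hδ1) hK
    · intro a b hab
      exact QSProof.code_inj (hf.1 ⟨a, rfl⟩ ⟨b, rfl⟩ hab)
    · intro a b c t hac ht
      have hne := QSProof.code_inj.ne hac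
      have hpos : 0 < dist (QSProof.code k a) (QSProof.code k c) := dist_pos.2 hne
      refine (hf.2 _ ⟨a, rfl⟩ _ ⟨b, rfl⟩ _ ⟨c, rfl⟩ hne).trans ?_
      apply mul_le_mul_of_nonneg_right _ dist_nonneg
      rw [← Real.dist_eq, ← Real.dist_eq] at ht
      have h1 : dist (QSProof.code k a) (QSProof.code k b) /
          dist (QSProof.code k a) (QSProof.code k c) ≤ t := (div_le_iff₀ hpos).2 ht
      have h0 : 0 ≤ dist (QSProof.code k a) (QSProof.code k b) /
          dist (QSProof.code k a) (QSProof.code k c) := by positivity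
      exact hmono.monotoneOn h0 (h0.trans h1) h1
end
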